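/- arXiv:2512.10567 — 2 statements merged into one kernel-verified Lean document; each statement's English description precedes it below -/
import Mathlib

section
/- Let n ≥ 1 and let q ∈ ℂ be nonzero and not a root of unity. Then the global dimension of the q-Heisenberg algebra 𝔥_n(q) is at most 3n: every left 𝔥_n(q)-module admits a projective resolution of length at most 3n. -/
noncomputable section

open scoped BigOperators

namespace QHeisenberg

/-- Index type for the `3n` generators: `x`-, `y`-, and `z`-variables. -/
abbrev GenIdx (n : ℕ) := Fin n ⊕ (Fin n ⊕ Fin n)

/-- The `x_i` generator in the free algebra. -/
def fX (n : ℕ) (i : Fin n) : FreeAlgebra ℂ (GenIdx n) := FreeAlgebra.ι ℂ (Sum.inl i)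

/-- The `y_i` generator in the free algebra. -/
def fY (n : ℕ) (i : Fin n) : FreeAlgebra ℂ (GenIdx n) := FreeAlgebra.ι ℂ (Sum.inr (Sum.inl i))

/-- The `z_i` generator in the free algebra. -/
def fZ (n : ℕ) (i : Fin n) : FreeAlgebra ℂ (GenIdx n) := FreeAlgebra.ι ℂ (Sum.inr (Sum.inr i))

/-- The defining relations of the q-Heisenberg algebra `𝔥_n(q)`. -/
inductive Rel (n : ℕ) (q : ℂ) :
    FreeAlgebra ℂ (GenIdx n) → FreeAlgebra ℂ (GenIdx n) → Prop
  | xx (i j : Fin n) : Rel n q (fX n i * fX n j) (fX n j * fX n i)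
  | yy (i j : Fin n) : Rel n q (fY n i * fY n j) (fY n j * fY n i)
  | zz (i j : Fin n) : Rel n q (fZ n i * fZ n j) (fZ n j * fZ n i)
  | xz (i : Fin n) : Rel n q (fX n i * fZ n i) (q • (fZ n i * fX n i))
  | yz (i : Fin n) : Rel n q (fY n i * fZ n i) (q⁻¹ • (fZ n i * fY n i))
  | xy (i : Fin n) : Rel n q (fX n i * fY n i) (q⁻¹ • (fY n i * fX n i) + fZ n i)
  | xyne (i j : Fin n) : i ≠ j → Rel n q (fX n i * fY n j) (fY n j * fX n i)
  | xzne (i j : Fin n) : i ≠ j → Rel n q (fX n i * fZ n j) (fZ n j * fX n i)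
  | yzne (i j : Fin n) : i ≠ j → Rel n q (fY n i * fZ n j) (fZ n j * fY n i)

/-- The q-Heisenberg algebra `𝔥_n(q)`. -/
abbrev H (n : ℕ) (q : ℂ) := RingQuot (Rel n q)

/-- The generator `x_i` of `𝔥_n(q)`. -/
def X (n : ℕ) (q : ℂ) (i : Fin n) : H n q := RingQuot.mkAlgHom ℂ (Rel n q) (fX n i)

/-- The generator `y_i` of `𝔥_n(q)`. -/
def Y (n : ℕ) (q : ℂ) (i : Fin n) : H n q := RingQuot.mkAlgHom ℂ (Rel n q) (fY n i)

/-- The generator `z_i` of `𝔥_n(q)`. -/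
def Z (n : ℕ) (q : ℂ) (i : Fin n) : H n q := RingQuot.mkAlgHom ℂ (Rel n q) (fZ n i)

/-- `q` is not a root of unity: `q ^ k ≠ 1` for every `k ≥ 1`. -/
def NotRootOfUnity (q : ℂ) : Prop := ∀ k : ℕ, 1 ≤ k → q ^ k ≠ 1

end QHeisenberg

namespace QHeisenberg

open CategoryTheory

/-- A module `M` admits a projective resolution of length at most `d`:
there is a projective resolution whose terms vanish in degrees above `d`. -/
def HasProjResLengthLE {R : Type} [Ring R] (M : ModuleCat R) (d : ℕ) : Prop :=
  ∃ P : ProjectiveResolution M, ∀ k : ℕ, d < k → Limits.IsZero (P.complex.X k)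

end QHeisenberg

/-!
For an Ore extension `S = A[X; σ, δ]` with `a X = X σ(a) + δ(a)`, the functor `S ⊗[A] -` is exact
and preserves projectives, so it does not raise projective dimensions. Every `S`-module `M` sits in
the characteristic sequence `0 ⟶ S ⊗[A] M_σ ⟶ S ⊗[A] M ⟶ M ⟶ 0`, where `M_σ` is `M` restricted to
`A` along `σ` and the first map is multiplication by `X ⊗ 1 - 1 ⊗ X`; hence the global dimension of
`S` exceeds that of `A` by at most one. Adjoining a further triple of generators in the order `z`,
`y`, `x` presents `𝔥_{n+1}(q)` as a threefold Ore extension of `𝔥_n(q)`, and `𝔥_0(q) = ℂ` has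
global dimension zero.
-/

/-! ### Projective dimension -/

section ProjectiveResolutions

open CategoryTheory Limits

universe v u

variable {C : Type u} [Category.{v} C] [Abelian C]

/-- The projective resolution given by a complex of projectives `K` that is exact in positive
degrees, together with an epimorphism `ε : K.X 0 ⟶ M` that makes `K.X 1 ⟶ K.X 0 ⟶ M` exact. -/
def projectiveResolutionOfAugmentation {M : C} (K : ChainComplex C ℕ)
    (projective : ∀ k, Projective (K.X k)) (exact_succ : ∀ k, K.ExactAt (k + 1))
    (ε : K.X 0 ⟶ M) (epi : Epi ε) {hε : K.d 1 0 ≫ ε = 0} (exact₀ : (ShortComplex.mk _ ε hε).Exact) :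
    ProjectiveResolution M where
  complex := K
  projective := projective
  π := (ChainComplex.toSingle₀Equiv K M).symm ⟨ε, hε⟩
  quasiIso := ⟨fun k => by
    cases k with
    | zero =>
      rw [ChainComplex.quasiIsoAt₀_iff, ShortComplex.quasiIso_iff_of_zeros' _
        (K.shape 0 0 (by simp)) rfl rfl]
      refine (ShortComplex.exact_and_epi_g_iff_of_iso ?_).2 ⟨exact₀, epi⟩
      exact ShortComplex.isoMk (Iso.refl _) (Iso.refl _) (Iso.refl _)
        ((Category.id_comp _).trans (Category.comp_id _).symm)
        ((Category.id_comp _).trans ((Category.comp_id _).trans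
          (ChainComplex.toSingle₀Equiv_symm_apply_f_zero ε hε)).symm)
    | succ k =>
      rw [quasiIsoAt_iff_exactAt' _ _ (ChainComplex.exactAt_succ_single_obj _ _)]
      exact exact_succ k⟩

theorem exact_comp_mono_iff {W X Y Z : C} {f : W ⟶ X} {g : X ⟶ Y} (i : Y ⟶ Z) [Mono i]
    (w : f ≫ g = 0) (w' : f ≫ g ≫ i = 0) :
    (ShortComplex.mk f (g ≫ i) w').Exact ↔ (ShortComplex.mk f g w).Exact :=
  (ShortComplex.exact_iff_of_epi_of_isIso_of_mono
    { τ₁ := 𝟙 W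
      τ₂ := 𝟙 X
      τ₃ := i : ShortComplex.mk f g w ⟶ ShortComplex.mk f (g ≫ i) w' }).symm

theorem exact_epi_comp_iff {W X Y Z : C} (p : W ⟶ X) {f : X ⟶ Y} {g : Y ⟶ Z} [Epi p]
    (w : f ≫ g = 0) (w' : (p ≫ f) ≫ g = 0) :
    (ShortComplex.mk (p ≫ f) g w').Exact ↔ (ShortComplex.mk f g w).Exact :=
  ShortComplex.exact_iff_of_epi_of_isIso_of_mono
    { τ₁ := p
      τ₂ := 𝟙 Y
      τ₃ := 𝟙 Z : ShortComplex.mk (p ≫ f) g w' ⟶ ShortComplex.mk f g w }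

/-- The splicing of a projective resolution of `S.X₁` with the short exact sequence `S`, whose
middle term is projective. -/
def spliceProjectiveResolution {S : ShortComplex C} (hS : S.ShortExact) (hS₂ : Projective S.X₂)
    (Q : ProjectiveResolution S.X₁) : ProjectiveResolution S.X₃ :=
  have := hS.mono_f
  let p : Q.complex.X 0 ⟶ S.X₁ := Q.π.f 0
  have : Epi p := inferInstanceAs (Epi (Q.π.f 0))
  have hp : Q.complex.d 1 0 ≫ p = 0 := Q.complex_d_comp_π_f_zero
  have w : Q.complex.d 1 0 ≫ p ≫ S.f = 0 := by rw [reassoc_of% hp, zero_comp]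
  have w' : (p ≫ S.f) ≫ S.g = 0 := by rw [Category.assoc, S.zero, comp_zero]
  projectiveResolutionOfAugmentation (Q.complex.augment (p ≫ S.f) w)
    (fun k => match k with
      | 0 => hS₂
      | k + 1 => Q.projective k)
    (fun k => by
      rw [HomologicalComplex.exactAt_iff' _ (k + 1 + 1) (k + 1) k (by simp) (by simp)]
      match k with
      | 0 => exact (exact_comp_mono_iff S.f hp w).2 Q.exact₀
      | k + 1 => exact Q.exact_succ k)
    S.g hS.epi_g ((exact_epi_comp_iff p S.zero w').2 hS.exact)

theorem spliceProjectiveResolution_complex_X_succ {S : ShortComplex C} (hS : S.ShortExact)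
    (hS₂ : Projective S.X₂) (Q : ProjectiveResolution S.X₁) (k : ℕ) :
    (spliceProjectiveResolution hS hS₂ Q).complex.X (k + 1) = Q.complex.X k :=
  rfl

theorem shortExact_kernel_ι_projective_π [EnoughProjectives C] (M : C) :
    (ShortComplex.mk (kernel.ι (Projective.π M)) (Projective.π M) (by simp)).ShortExact where
  exact := ShortComplex.exact_kernel _

theorem exists_projectiveResolution_isZero_of_hasProjectiveDimensionLE [EnoughProjectives C]
    (d : ℕ) (M : C) [HasProjectiveDimensionLE M d] :
    ∃ P : ProjectiveResolution M, ∀ k, d < k → IsZero (P.complex.X k) := by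
  induction d generalizing M with
  | zero =>
    have : Projective M := (projective_iff_hasProjectiveDimensionLE_zero M).2 ‹_›
    exact ⟨ProjectiveResolution.self M, fun k hk =>
      HomologicalComplex.isZero_single_obj_X _ _ _ _ hk.ne'⟩
  | succ d ih =>
    have hS := shortExact_kernel_ι_projective_π M
    have hS₂ := Projective.projective_over M
    have := (hS.hasProjectiveDimensionLT_X₃_iff d hS₂).1 ‹_›
    obtain ⟨Q, hQ⟩ := ih (kernel (Projective.π M))
    refine ⟨spliceProjectiveResolution hS hS₂ Q, fun k hk => ?_⟩
    obtain ⟨k, rfl⟩ := Nat.exists_eq_succ_of_ne_zero (Nat.ne_zero_of_lt hk)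
    rw [spliceProjectiveResolution_complex_X_succ]
    exact hQ k (Nat.lt_of_succ_lt_succ hk)

end ProjectiveResolutions

section Adjunction

open CategoryTheory Limits

universe v₁ v₂ u₁ u₂

variable {C : Type u₁} [Category.{v₁} C] [Abelian C] [EnoughProjectives C]
  {D : Type u₂} [Category.{v₂} D] [Abelian D] {F : C ⥤ D} {G : D ⥤ C}

theorem hasProjectiveDimensionLE_obj_of_adjunction (adj : F ⊣ G) [F.PreservesMonomorphisms]
    [G.PreservesEpimorphisms] (d : ℕ) (M : C) [HasProjectiveDimensionLE M d] :
    HasProjectiveDimensionLE (F.obj M) d := by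
  have := adj.isLeftAdjoint
  have : PreservesColimitsOfSize.{0, 0} F := adj.leftAdjoint_preservesColimits
  have : F.PreservesZeroMorphisms := inferInstance
  induction d generalizing M with
  | zero =>
    have : Projective M := (projective_iff_hasProjectiveDimensionLE_zero M).2 ‹_›
    exact (projective_iff_hasProjectiveDimensionLE_zero _).1 (adj.map_projective M this)
  | succ d ih =>
    have hS := shortExact_kernel_ι_projective_π M
    have hS₂ := Projective.projective_over M
    have := (hS.hasProjectiveDimensionLT_X₃_iff d hS₂).1 ‹_›
    have hFS := hS.exact.map_of_epi_of_preservesCokernel F hS.epi_g inferInstance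
    have : ((ShortComplex.mk _ _ (kernel.condition (Projective.π M))).map F).ShortExact :=
      { exact := hFS
        mono_f := inferInstanceAs (Mono (F.map _))
        epi_g := inferInstanceAs (Epi (F.map _)) }
    exact (this.hasProjectiveDimensionLT_X₃_iff d (adj.map_projective _ hS₂)).2 (ih _)

end Adjunction

section GlobalDimension

open CategoryTheory

universe v u u'

instance {R : Type u} {S : Type u'} [Ring R] [Ring S] (f : R →+* S) :
    (ModuleCat.restrictScalars.{v} f).PreservesEpimorphisms where
  preserves g hg := by
    rw [ModuleCat.epi_iff_surjective] at hg ⊢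
    exact hg

/-- The left global dimension of `R`, tested on modules in the universe `v`, is at most `d`. -/
def HasGlobalDimensionLE (R : Type u) [Ring R] (d : ℕ) : Prop :=
  ∀ M : ModuleCat.{v} R, HasProjectiveDimensionLE M d

namespace HasGlobalDimensionLE

theorem of_divisionRing (K : Type u) [DivisionRing K] : HasGlobalDimensionLE.{v} K 0 := by
  intro M
  have : Module.Projective K M := Module.Projective.of_free
  exact (projective_iff_hasProjectiveDimensionLE_zero M).1 inferInstance

attribute [local instance] RingHomInvPair.of_ringEquiv in
theorem of_ringEquiv {R : Type u} {S : Type u'} [Ring R] [Ring S] [Small.{v} R] [Small.{v} S]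
    (e : R ≃+* S) {d : ℕ} (h : HasGlobalDimensionLE.{v} R d) : HasGlobalDimensionLE.{v} S d := by
  intro M
  have := h ((ModuleCat.restrictScalars (RingHomClass.toRingHom e)).obj M)
  let f : (ModuleCat.restrictScalars (RingHomClass.toRingHom e)).obj M
      ≃ₛₗ[RingHomClass.toRingHom e] M :=
    { AddEquiv.refl M with map_smul' := fun _ _ => rfl }
  exact ModuleCat.hasProjectiveDimensionLE_of_semiLinearEquiv e f d

end HasGlobalDimensionLE

end GlobalDimension

/-! ### Ore extensions -/

section CharacteristicSequence

variable {M : Type*} [AddCommGroup M] (T : AddMonoid.End M)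

/-- The evaluation `∑ Xⁱ ⊗ mᵢ ↦ ∑ Tⁱ mᵢ`, where `ℕ →₀ M` stands for `M[X]`. -/
def evalEnd : (ℕ →₀ M) →+ M :=
  Finsupp.liftAddHom fun i => T ^ i

/-- The additive map `Xⁱ ⊗ m ↦ Xⁱ⁺¹ ⊗ m - Xⁱ ⊗ T m`, which is multiplication by `X - T` on
`M[X]`. -/
def shiftSub : (ℕ →₀ M) →+ (ℕ →₀ M) :=
  Finsupp.liftAddHom fun i => Finsupp.singleAddHom (i + 1) - (Finsupp.singleAddHom i).comp T

@[simp]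
theorem evalEnd_single (i : ℕ) (m : M) : evalEnd T (Finsupp.single i m) = (T ^ i) m :=
  Finsupp.liftAddHom_apply_single _ i m

@[simp]
theorem shiftSub_single (i : ℕ) (m : M) :
    shiftSub T (Finsupp.single i m) = Finsupp.single (i + 1) m - Finsupp.single i (T m) :=
  Finsupp.liftAddHom_apply_single _ i m

theorem evalEnd_surjective : Function.Surjective (evalEnd T) := fun m =>
  ⟨Finsupp.single 0 m, by simp⟩

theorem shiftSub_apply_succ (x : ℕ →₀ M) (i : ℕ) :
    shiftSub T x (i + 1) = x i - T (x (i + 1)) := by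
  induction x using Finsupp.induction_linear with
  | zero => simp
  | add x y hx hy => simp only [map_add, Finsupp.add_apply, hx, hy]; abel
  | single j m =>
    rcases eq_or_ne j (i + 1) with rfl | hj
    · simp
    · simp [Finsupp.single_apply, hj]

theorem shiftSub_injective : Function.Injective (shiftSub T) := by
  refine (injective_iff_map_eq_zero _).2 fun x hx => ?_
  have step (i : ℕ) : x i = T (x (i + 1)) := by
    rw [← sub_eq_zero, ← shiftSub_apply_succ, hx, Finsupp.zero_apply]
  have iterate (i k : ℕ) : x i = (T ^ k) (x (i + k)) := by
    induction k with
    | zero => simp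
    | succ k ih => rw [ih, step, pow_succ]; rfl
  obtain ⟨N, hN⟩ := x.support.exists_nat_subset_range
  ext i
  have : x (i + N) = 0 := Finsupp.notMem_support_iff.1 fun h => by
    have := Finset.mem_range.1 (hN h)
    omega
  rw [iterate i N, this, map_zero, Finsupp.zero_apply]

theorem sub_single_evalEnd_mem_range_shiftSub (y : ℕ →₀ M) :
    y - Finsupp.single 0 (evalEnd T y) ∈ (shiftSub T).range := by
  induction y using Finsupp.induction_linear with
  | zero => simp
  | add x y hx hy =>
    convert add_mem hx hy using 1
    simp only [map_add, Finsupp.single_add]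
    abel
  | single i m =>
    rw [evalEnd_single]
    induction i generalizing m with
    | zero => simp
    | succ i ih =>
      convert add_mem (AddMonoidHom.mem_range.2 ⟨Finsupp.single i m, rfl⟩) (ih (T m)) using 1
      simp [pow_succ]

theorem shiftSub_evalEnd_exact : Function.Exact (shiftSub T) (evalEnd T) := by
  refine fun y => ⟨fun hy => ?_, ?_⟩
  · simpa [hy] using sub_single_evalEnd_mem_range_shiftSub T y
  · rintro ⟨x, rfl⟩
    induction x using Finsupp.induction_linear with
    | zero => simp
    | add x y hx hy => rw [map_add, map_add, hx, hy, add_zero]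
    | single i m => simp [pow_succ]

end CharacteristicSequence

universe u v w

/-- A `K`-linear Ore datum on `A`: an endomorphism `σ` and a `σ`-derivation `δ`. The convention is
that the variable of the Ore extension satisfies `a X = X σ(a) + δ(a)`, so that the extension is
`⨁ Xⁱ A` and free as a right `A`-module even when `σ` is not invertible. -/
structure OreDatum (K : Type w) (A : Type u) [CommRing K] [Ring A] [Algebra K A] where
  σ : A →ₐ[K] A
  δ : A →ₗ[K] A
  leibniz : ∀ a b, δ (a * b) = δ a * σ b + a * δ b

namespace OreDatum

section Extension

variable {K : Type w} {A : Type u} [CommRing K] [Ring A] [Algebra K A]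

/-- The Ore datum with zero derivation. -/
@[simps]
def ofAlgHom (σ : A →ₐ[K] A) : OreDatum K A where
  σ := σ
  δ := 0
  leibniz := by simp

variable (D : OreDatum K A)

theorem δ_one : D.δ 1 = 0 := by
  simpa using D.leibniz 1 1

@[simp]
theorem δ_algebraMap (r : K) : D.δ (algebraMap K A r) = 0 := by
  rw [Algebra.algebraMap_eq_smul_one, map_smul, D.δ_one, smul_zero]

/-- The relations of the Ore extension, on free generators `some a` for `a : A` and `none` for the
variable. -/
inductive Rel : FreeAlgebra K (Option A) → FreeAlgebra K (Option A) → Prop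
  | add (a b : A) : Rel (FreeAlgebra.ι K (some (a + b)))
      (FreeAlgebra.ι K (some a) + FreeAlgebra.ι K (some b))
  | mul (a b : A) : Rel (FreeAlgebra.ι K (some (a * b)))
      (FreeAlgebra.ι K (some a) * FreeAlgebra.ι K (some b))
  | scalar (r : K) : Rel (FreeAlgebra.ι K (some (algebraMap K A r))) (algebraMap K _ r)
  | comm (a : A) : Rel (FreeAlgebra.ι K (some a) * FreeAlgebra.ι K none)
      (FreeAlgebra.ι K none * FreeAlgebra.ι K (some (D.σ a)) + FreeAlgebra.ι K (some (D.δ a)))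

/-- The Ore extension `A[X; σ, δ]`. -/
def Extension : Type (max u w) := RingQuot D.Rel

instance : Ring D.Extension := inferInstanceAs (Ring (RingQuot D.Rel))

instance : Algebra K D.Extension := inferInstanceAs (Algebra K (RingQuot D.Rel))

/-- The quotient map from the free algebra onto the Ore extension. -/
def ofFreeAlgebra : FreeAlgebra K (Option A) →ₐ[K] D.Extension := RingQuot.mkAlgHom K D.Rel

variable {D} in
theorem ofFreeAlgebra_eq_of_rel {u v : FreeAlgebra K (Option A)} (h : D.Rel u v) :
    D.ofFreeAlgebra u = D.ofFreeAlgebra v :=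
  RingQuot.mkAlgHom_rel K h

/-- The inclusion of the coefficient ring in the Ore extension. -/
def C : A →ₐ[K] D.Extension :=
  AlgHom.ofLinearMap
    { toFun := fun a => D.ofFreeAlgebra (FreeAlgebra.ι K (some a))
      map_add' := fun a b => (ofFreeAlgebra_eq_of_rel (Rel.add a b)).trans (map_add _ _ _)
      map_smul' := fun r a => by
        rw [Algebra.smul_def, ofFreeAlgebra_eq_of_rel (Rel.mul _ _), map_mul,
          ofFreeAlgebra_eq_of_rel (Rel.scalar r), AlgHom.commutes, ← Algebra.smul_def,
          RingHom.id_apply] }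
    (by simpa using ofFreeAlgebra_eq_of_rel (Rel.scalar (D := D) 1))
    (fun a b => (ofFreeAlgebra_eq_of_rel (Rel.mul a b)).trans (map_mul _ _ _))

/-- The variable of the Ore extension. -/
def X : D.Extension := D.ofFreeAlgebra (FreeAlgebra.ι K none)

theorem C_mul_X (a : A) : D.C a * D.X = D.X * D.C (D.σ a) + D.C (D.δ a) := by
  have := ofFreeAlgebra_eq_of_rel (Rel.comm (D := D) a)
  rwa [map_add, map_mul, map_mul] at this

@[elab_as_elim]
theorem induction_on {P : D.Extension → Prop} (u : D.Extension) (C : ∀ a, P (D.C a)) (X : P D.X)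
    (add : ∀ u v, P u → P v → P (u + v)) (mul : ∀ u v, P u → P v → P (u * v)) : P u := by
  obtain ⟨u, rfl⟩ : ∃ w, D.ofFreeAlgebra w = u := RingQuot.mkAlgHom_surjective K D.Rel u
  induction u using FreeAlgebra.induction with
  | grade0 r => rw [AlgHom.commutes, ← D.C.commutes]; exact C _
  | grade1 i => cases i with
    | none => exact X
    | some a => exact C a
  | mul u v hu hv => rw [map_mul]; exact mul _ _ hu hv
  | add u v hu hv => rw [map_add]; exact add _ _ hu hv

theorem mem_of_C_mem_of_X_mem {S : Subalgebra K D.Extension} (hC : ∀ a, D.C a ∈ S)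
    (hX : D.X ∈ S) (u : D.Extension) : u ∈ S := by
  induction u using D.induction_on with
  | C a => exact hC a
  | X => exact hX
  | add u v hu hv => exact add_mem hu hv
  | mul u v hu hv => exact mul_mem hu hv

variable {E : Type*} [Ring E] [Algebra K E]

theorem algHom_ext {f g : D.Extension →ₐ[K] E} (hC : ∀ a, f (D.C a) = g (D.C a))
    (hX : f D.X = g D.X) : f = g := by
  ext u
  induction u using D.induction_on with
  | C a => exact hC a
  | X => exact hX
  | add u v hu hv => rw [map_add, map_add, hu, hv]
  | mul u v hu hv => rw [map_mul, map_mul, hu, hv]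

/-- The universal property of the Ore extension. -/
def lift (g : A →ₐ[K] E) (t : E) (h : ∀ a, g a * t = t * g (D.σ a) + g (D.δ a)) :
    D.Extension →ₐ[K] E :=
  RingQuot.liftAlgHom K ⟨FreeAlgebra.lift K fun i => i.elim t g, by
    rintro _ _ (⟨a, b⟩ | ⟨a, b⟩ | ⟨r⟩ | ⟨a⟩) <;> simp [h]⟩

variable (g : A →ₐ[K] E) (t : E) (h : ∀ a, g a * t = t * g (D.σ a) + g (D.δ a))

@[simp]
theorem lift_C (a : A) : D.lift g t h (D.C a) = g a :=
  (RingQuot.liftAlgHom_mkAlgHom_apply K _ _ _).trans (by simp)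

@[simp]
theorem lift_X : D.lift g t h D.X = t :=
  (RingQuot.liftAlgHom_mkAlgHom_apply K _ _ _).trans (by simp)

/-- The elements of `A` whose commutation with `t`, after mapping along `g`, is the one prescribed
by the Ore datum. -/
def skewCommutant (g : A →ₐ[K] E) (t : E) : Subalgebra K A where
  carrier := {a | g a * t = t * g (D.σ a) + g (D.δ a)}
  add_mem' {a b} ha hb := by
    simp only [Set.mem_ofPred_eq, map_add, add_mul, mul_add] at *
    rw [ha, hb]
    abel
  mul_mem' {a b} ha hb := by
    simp only [Set.mem_ofPred_eq, map_mul, D.leibniz, map_add] at *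
    calc g a * g b * t = g a * (t * g (D.σ b) + g (D.δ b)) := by rw [mul_assoc, hb]
      _ = (g a * t) * g (D.σ b) + g a * g (D.δ b) := by rw [mul_add, mul_assoc]
      _ = _ := by rw [ha]; noncomm_ring
  algebraMap_mem' r := by simp [Algebra.commutes]

theorem mem_skewCommutant {a : A} :
    a ∈ D.skewCommutant g t ↔ g a * t = t * g (D.σ a) + g (D.δ a) :=
  Iff.rfl

end Extension

section Extend

variable {K : Type w} {A : Type u} [CommRing K] [Ring A] [Algebra K A] (D : OreDatum K A)
  (σ' : D.Extension →ₐ[K] D.Extension) (s : D.Extension)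

/-- The representation `u ↦ !![u, δ' u; 0, σ' u]` attached to the `σ'`-derivation `δ'` of the Ore
extension that kills the coefficients and sends the variable to `s`. -/
def extendMatrix (h : ∀ a, D.C a * s = s * σ' (D.C (D.σ a))) :
    D.Extension →ₐ[K] Matrix (Fin 2) (Fin 2) D.Extension :=
  D.lift ((Matrix.diagonalAlgHom K).comp (AlgHom.pi ![D.C, σ'.comp D.C]))
    !![D.X, s; 0, σ' D.X] fun a => by
      ext i j
      fin_cases i <;> fin_cases j <;>
        simp [Matrix.vecMul_diagonal, h, C_mul_X, ← map_mul]

variable {D σ' s} (h : ∀ a, D.C a * s = s * σ' (D.C (D.σ a)))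

theorem extendMatrix_eq (u : D.Extension) :
    D.extendMatrix σ' s h u = !![u, D.extendMatrix σ' s h u 0 1; 0, σ' u] := by
  suffices D.extendMatrix σ' s h u 0 0 = u ∧ D.extendMatrix σ' s h u 1 0 = 0 ∧
      D.extendMatrix σ' s h u 1 1 = σ' u by
    ext i j
    fin_cases i <;> fin_cases j <;> simp [this]
  induction u using D.induction_on with
  | C a => simp [extendMatrix]
  | X => simp [extendMatrix]
  | add u v hu hv => simp [hu, hv]
  | mul u v hu hv => simp [hu, hv, Matrix.mul_apply]

/-- The Ore datum on `A[X; σ, δ]` whose derivation kills `A` and sends the variable to `s`. -/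
@[simps σ]
def extend (h : ∀ a, D.C a * s = s * σ' (D.C (D.σ a))) : OreDatum K D.Extension where
  σ := σ'
  δ := Matrix.entryLinearMap K _ 0 1 ∘ₗ (D.extendMatrix σ' s h).toLinearMap
  leibniz u v := by
    simp only [LinearMap.comp_apply, AlgHom.toLinearMap_apply, map_mul]
    rw [extendMatrix_eq h u, extendMatrix_eq h v]
    simp [add_comm]

@[simp]
theorem extend_δ_C (a : A) : (extend h).δ (D.C a) = 0 := by
  simp [extend, extendMatrix]

@[simp]
theorem extend_δ_X : (extend h).δ D.X = s := by
  simp [extend, extendMatrix]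

end Extend

section Scale

variable {K : Type w} {A : Type u} [CommRing K] [Ring A] [Algebra K A] (D : OreDatum K A)
  (g : A →ₐ[K] A) (c : K) (hσ : ∀ a, D.σ (g a) = g (D.σ a))
  (hδ : ∀ a, c • D.δ (g a) = g (D.δ a))

/-- The endomorphism of the Ore extension that is `g` on the coefficients and multiplies the
variable by `c`. -/
def scale : D.Extension →ₐ[K] D.Extension :=
  D.lift (D.C.comp g) (c • D.X) fun a => by
    simp [C_mul_X, smul_add, hσ, ← hδ]

@[simp]
theorem scale_C (a : A) : D.scale g c hσ hδ (D.C a) = D.C (g a) :=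
  D.lift_C _ _ _ a

@[simp]
theorem scale_X : D.scale g c hσ hδ D.X = c • D.X :=
  D.lift_X _ _ _

end Scale

end OreDatum

/-! ### Induced modules -/

namespace OreDatum

open CategoryTheory

variable {K : Type w} {A : Type u} [CommRing K] [Ring A] [Algebra K A] (D : OreDatum K A)

section Action

variable (M : Type v) [AddCommGroup M] [Module K M] [Module A M] [IsScalarTower K A M]

/-- The shift `Xⁱ ⊗ m ↦ Xⁱ⁺¹ ⊗ m`. -/
def shift : Module.End K (ℕ →₀ M) :=
  Finsupp.lmapDomain M K Nat.succ

@[simp]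
theorem shift_single (i : ℕ) (m : M) :
    shift (K := K) M (Finsupp.single i m) = Finsupp.single (i + 1) m := by
  simp [shift]

/-- The product `a • (Xⁱ ⊗ m)`, computed by moving `a` past the powers of `X` with
`a X = X σ(a) + δ(a)`. -/
def smulMonomial : ℕ → A →ₗ[K] M →ₗ[K] (ℕ →₀ M)
  | 0 => (Algebra.lsmul K K M).toLinearMap.compr₂ (Finsupp.lsingle 0)
  | i + 1 => (smulMonomial i ∘ₗ D.σ.toLinearMap).compr₂ (shift M) + smulMonomial i ∘ₗ D.δ

/-- The linear extension of `smulMonomial` to `ℕ →₀ M`. -/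
def coeffActionLinear : A →ₗ[K] Module.End K (ℕ →₀ M) :=
  (Finsupp.lsum K).toLinearMap ∘ₗ LinearMap.pi (D.smulMonomial M)

variable {M} in
theorem coeffActionLinear_single_zero (a : A) (m : M) :
    D.coeffActionLinear M a (Finsupp.single 0 m) = Finsupp.single 0 (a • m) := by
  simp [coeffActionLinear, smulMonomial]

theorem coeffActionLinear_mul_shift (a : A) :
    D.coeffActionLinear M a * shift M =
      shift M * D.coeffActionLinear M (D.σ a) + D.coeffActionLinear M (D.δ a) := by
  ext i m : 2
  simp [coeffActionLinear, smulMonomial]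

variable {M} in
theorem coeffActionLinear_shift (a : A) (x : ℕ →₀ M) :
    D.coeffActionLinear M a (shift (K := K) M x) =
      shift (K := K) M (D.coeffActionLinear M (D.σ a) x) + D.coeffActionLinear M (D.δ a) x :=
  LinearMap.congr_fun (D.coeffActionLinear_mul_shift M a) x

theorem coeffActionLinear_one : D.coeffActionLinear M 1 = 1 := by
  ext i m : 2
  induction i with
  | zero => simp [coeffActionLinear_single_zero]
  | succ i ih =>
    simp only [LinearMap.comp_apply, Finsupp.lsingle_apply, Module.End.one_apply] at ih ⊢
    rw [← shift_single (K := K), coeffActionLinear_shift, map_one, ih, D.δ_one]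
    simp

theorem coeffActionLinear_mul (a b : A) :
    D.coeffActionLinear M (a * b) = D.coeffActionLinear M a * D.coeffActionLinear M b := by
  ext i m : 2
  simp only [LinearMap.comp_apply, Finsupp.lsingle_apply, Module.End.mul_apply]
  induction i generalizing a b with
  | zero => simp [coeffActionLinear_single_zero, mul_smul]
  | succ i ih =>
    rw [← shift_single (K := K), coeffActionLinear_shift, coeffActionLinear_shift, map_add,
      coeffActionLinear_shift, map_mul, ih, D.leibniz, map_add, LinearMap.add_apply, ih, ih]
    abel

/-- The action of the Ore extension on `ℕ →₀ M`, for a `K`-linear `A`-module `M`. -/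
def action : D.Extension →ₐ[K] Module.End K (ℕ →₀ M) :=
  D.lift (AlgHom.ofLinearMap (D.coeffActionLinear M) (D.coeffActionLinear_one M)
    (D.coeffActionLinear_mul M)) (shift M) (D.coeffActionLinear_mul_shift M)

@[simp]
theorem action_X : D.action M D.X = shift M :=
  D.lift_X _ _ _

variable {M} in
theorem action_C_single_zero (a : A) (m : M) :
    D.action M (D.C a) (Finsupp.single 0 m) = Finsupp.single 0 (a • m) :=
  (LinearMap.congr_fun (D.lift_C _ _ _ a) _).trans (D.coeffActionLinear_single_zero a m)

end Action


theorem C_smul_X_smul {N : Type*} [AddCommGroup N] [Module D.Extension N] (a : A) (x : N) :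
    D.C a • D.X • x = D.X • D.C (D.σ a) • x + D.C (D.δ a) • x := by
  simp only [← mul_smul, ← add_smul, C_mul_X]

section Induced

/-- The module `A[X; σ, δ] ⊗[A] M` induced by the `A`-module `M`, realised as `⨁ Xⁱ ⊗ M`. -/
def Induced (_ : OreDatum K A) (M : Type v) [AddCommGroup M] : Type v := ℕ →₀ M

namespace Induced

section AddCommGroup

variable (M : Type v) [AddCommGroup M]

instance : AddCommGroup (D.Induced M) := inferInstanceAs (AddCommGroup (ℕ →₀ M))

variable {M} in
/-- The element `Xⁱ ⊗ m`. -/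
def single (i : ℕ) : M →+ D.Induced M := Finsupp.singleAddHom i

variable {D M}

@[elab_as_elim]
theorem induction_on {P : D.Induced M → Prop} (x : D.Induced M) (zero : P 0)
    (single : ∀ i m, P (single D i m)) (add : ∀ x y, P x → P y → P (x + y)) : P x :=
  Finsupp.induction_linear (motive := P) x zero add single

theorem addHom_ext {N : Type*} [AddCommGroup N] {f g : D.Induced M →+ N}
    (h : ∀ i m, f (single D i m) = g (single D i m)) : f = g :=
  Finsupp.addHom_ext h

end AddCommGroup

variable {M : Type v} [AddCommGroup M] [Module A M]

instance : Module D.Extension (D.Induced M) :=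
  letI : Module K M := Module.compHom M (algebraMap K A)
  haveI : IsScalarTower K A M := IsScalarTower.of_algebraMap_smul fun _ _ => rfl
  Module.compHom (ℕ →₀ M) (D.action M).toRingHom

@[simp]
theorem X_smul_single (i : ℕ) (m : M) : D.X • single D i m = single D (i + 1) m := by
  let : Module K M := Module.compHom M (algebraMap K A)
  have : IsScalarTower K A M := IsScalarTower.of_algebraMap_smul fun _ _ => rfl
  exact (LinearMap.congr_fun (D.action_X M) _).trans (shift_single (K := K) M i m)

@[simp]
theorem C_smul_single_zero (a : A) (m : M) : D.C a • single D 0 m = single D 0 (a • m) := by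
  let : Module K M := Module.compHom M (algebraMap K A)
  have : IsScalarTower K A M := IsScalarTower.of_algebraMap_smul fun _ _ => rfl
  exact D.action_C_single_zero a m

theorem X_pow_smul_single (i j : ℕ) (m : M) : D.X ^ i • single D j m = single D (i + j) m := by
  induction i with
  | zero => simp
  | succ i ih => rw [pow_succ', mul_smul, ih, X_smul_single, Nat.succ_add]

variable {N : Type*} [AddCommGroup N] [Module D.Extension N]

variable {D} in
@[ext]
theorem hom_ext {f g : D.Induced M →ₗ[D.Extension] N}
    (h : ∀ m, f (single D 0 m) = g (single D 0 m)) : f = g := by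
  refine LinearMap.toAddMonoidHom_injective (addHom_ext fun i m => ?_)
  have hi : single D i m = D.X ^ i • single D 0 m := (X_pow_smul_single D i 0 m).symm
  exact hi ▸ (f.map_smul _ _).trans ((congrArg _ (h m)).trans (g.map_smul _ _).symm)

variable (φ : M →ₛₗ[D.C.toRingHom] N)

/-- The additive map `∑ Xⁱ ⊗ mᵢ ↦ ∑ Xⁱ • φ mᵢ`. -/
def liftAddHom : D.Induced M →+ N :=
  Finsupp.liftAddHom fun i => (DistribSMul.toAddMonoidHom N (D.X ^ i)).comp φ.toAddMonoidHom

@[simp]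
theorem liftAddHom_single (i : ℕ) (m : M) : liftAddHom D φ (single D i m) = D.X ^ i • φ m :=
  Finsupp.liftAddHom_apply_single _ i m

theorem liftAddHom_X_smul (x : D.Induced M) :
    liftAddHom D φ (D.X • x) = D.X • liftAddHom D φ x := by
  induction x using induction_on with
  | zero => simp
  | single i m => simp [pow_succ', mul_smul]
  | add x y hx hy => simp only [smul_add, map_add, hx, hy]

theorem liftAddHom_C_smul (a : A) (x : D.Induced M) :
    liftAddHom D φ (D.C a • x) = D.C a • liftAddHom D φ x := by
  induction x using induction_on with
  | zero => simp
  | single i m =>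
    induction i generalizing a with
    | zero => simpa using φ.map_smulₛₗ a m
    | succ i ih =>
      rw [← X_smul_single, C_smul_X_smul, map_add, liftAddHom_X_smul, liftAddHom_X_smul, ih, ih,
        C_smul_X_smul]
  | add x y hx hy => simp only [smul_add, map_add, hx, hy]

/-- The extension of a `D.C`-semilinear map to the induced module. -/
def lift : D.Induced M →ₗ[D.Extension] N where
  __ := liftAddHom D φ
  map_smul' u x := by
    change liftAddHom D φ (u • x) = u • liftAddHom D φ x
    induction u using D.induction_on generalizing x with
    | C a => exact liftAddHom_C_smul D φ a x
    | X => exact liftAddHom_X_smul D φ x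
    | add u v hu hv => simp only [add_smul, map_add, hu, hv]
    | mul u v hu hv => simp only [mul_smul, hu, hv]

@[simp]
theorem lift_single (i : ℕ) (m : M) : lift D φ (single D i m) = D.X ^ i • φ m :=
  liftAddHom_single D φ i m

variable (M) in
/-- The inclusion `m ↦ 1 ⊗ m` of a module in the module it induces. -/
def unit : M →ₛₗ[D.C.toRingHom] D.Induced M where
  __ := single D 0
  map_smul' a m := (C_smul_single_zero D a m).symm

variable (M N) in
/-- The universal property of the induced module. -/
def liftEquiv : (M →ₛₗ[D.C.toRingHom] N) ≃ (D.Induced M →ₗ[D.Extension] N) where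
  toFun φ := lift D φ
  invFun f := f.comp (unit D M)
  left_inv φ := by
    ext m
    exact (lift_single D φ 0 m).trans (by simp)
  right_inv f := by
    ext m
    exact (lift_single D _ 0 m).trans (by rw [pow_zero, one_smul]; rfl)

variable {M₂ : Type v} [AddCommGroup M₂] [Module A M₂]

/-- The functoriality of `Induced`. -/
def map (f : M →ₗ[A] M₂) : D.Induced M →ₗ[D.Extension] D.Induced M₂ :=
  lift D ((unit D M₂).comp f)

theorem map_apply (f : M →ₗ[A] M₂) (x : D.Induced M) :
    map D f x = Finsupp.mapRange f f.map_zero x := by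
  induction x using induction_on with
  | zero => exact (map_zero _).trans Finsupp.mapRange_zero.symm
  | single i m =>
    rw [map, lift_single]
    exact (X_pow_smul_single D i 0 (f m)).trans
      (Finsupp.mapRange_single (hf := f.map_zero)).symm
  | add x y hx hy =>
    rw [map_add, hx, hy]
    exact (Finsupp.mapRange_add f.map_add x y).symm

theorem map_injective {f : M →ₗ[A] M₂} (hf : Function.Injective f) :
    Function.Injective (map D f) := by
  have : ⇑(map D f) = Finsupp.mapRange f f.map_zero := funext (map_apply D f)
  exact this ▸ Finsupp.mapRange_injective f f.map_zero hf

end Induced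

end Induced

section Adjunction

/-- The hom-set equivalence that makes `Induced` left adjoint to the restriction of scalars. -/
def inducedHomEquiv (M : ModuleCat.{v} A) (N : ModuleCat.{v} D.Extension) :
    (ModuleCat.of D.Extension (D.Induced M) ⟶ N) ≃
      (M ⟶ (ModuleCat.restrictScalars D.C.toRingHom).obj N) :=
  ModuleCat.homEquiv.trans <| (Induced.liftEquiv D M N).symm.trans
    (ModuleCat.semilinearMapAddEquiv D.C.toRingHom M N).toEquiv

/-- The functor `M ↦ D.Induced M`. -/
def inducedFunctor : ModuleCat.{v} A ⥤ ModuleCat.{v} D.Extension :=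
  Adjunction.leftAdjointOfEquiv D.inducedHomEquiv fun _ _ _ _ _ => rfl

/-- `Induced` is left adjoint to the restriction of scalars. -/
def inducedAdjunction :
    D.inducedFunctor ⊣ ModuleCat.restrictScalars.{v} D.C.toRingHom :=
  Adjunction.adjunctionOfEquivLeft D.inducedHomEquiv fun _ _ _ _ _ => rfl

instance : D.inducedFunctor.PreservesMonomorphisms where
  preserves {M N} f hf := by
    have hf := (ModuleCat.mono_iff_injective f).1 hf
    exact (ModuleCat.mono_iff_injective _).2 (Induced.map_injective D hf)

end Adjunction

section CharacteristicSequence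

variable (M : ModuleCat.{v} D.Extension)

/-- The restriction of `M` to `A`. -/
abbrev restriction : ModuleCat.{v} A :=
  (ModuleCat.restrictScalars D.C.toRingHom).obj M

/-- The restriction of `M` to `A`, twisted by `σ`. -/
abbrev twistedRestriction : ModuleCat.{v} A :=
  (ModuleCat.restrictScalars (D.C.comp D.σ).toRingHom).obj M

/-- The element `Xⁱ ⊗ m` of the module induced by the restriction of `M`. -/
def restrictionSingle (i : ℕ) : M →+ D.Induced (D.restriction M) :=
  Induced.single D (M := D.restriction M) i

variable {M}

theorem X_pow_smul_restrictionSingle (i j : ℕ) (m : M) :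
    D.X ^ i • D.restrictionSingle M j m = D.restrictionSingle M (i + j) m :=
  Induced.X_pow_smul_single D (M := D.restriction M) i j m

theorem C_smul_restrictionSingle_zero (a : A) (m : M) :
    D.C a • D.restrictionSingle M 0 m = D.restrictionSingle M 0 (D.C a • m) :=
  Induced.C_smul_single_zero D (M := D.restriction M) a m

theorem C_smul_restrictionSingle_one (a : A) (m : M) :
    D.C a • D.restrictionSingle M 1 m =
      D.restrictionSingle M 1 (D.C (D.σ a) • m) + D.restrictionSingle M 0 (D.C (D.δ a) • m) := by
  have hX (m : M) : D.restrictionSingle M 1 m = D.X • D.restrictionSingle M 0 m := by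
    simpa using (D.X_pow_smul_restrictionSingle 1 0 m).symm
  simp only [hX, C_smul_X_smul, C_smul_restrictionSingle_zero]

variable (M)

/-- The evaluation map `∑ Xⁱ ⊗ mᵢ ↦ ∑ Xⁱ • mᵢ`. -/
def evalInduced : D.Induced (D.restriction M) →ₗ[D.Extension] M :=
  Induced.lift D
    { __ := AddMonoidHom.id M
      map_smul' := fun _ _ => rfl }

/-- The multiplication by `X ⊗ 1 - 1 ⊗ X`. It is linear on the module induced by the twisted
restriction because `a X = X σ(a) + δ(a)`. -/
def shiftInduced :
    D.Induced (D.twistedRestriction M) →ₗ[D.Extension] D.Induced (D.restriction M) :=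
  Induced.lift D
    { __ := D.restrictionSingle M 1 -
        (D.restrictionSingle M 0).comp (DistribSMul.toAddMonoidHom M D.X)
      map_smul' := fun a (m : M) => by
        change D.restrictionSingle M 1 (D.C (D.σ a) • m) -
            D.restrictionSingle M 0 (D.X • D.C (D.σ a) • m) =
          D.C a • (D.restrictionSingle M 1 m - D.restrictionSingle M 0 (D.X • m))
        rw [smul_sub, C_smul_restrictionSingle_one, C_smul_restrictionSingle_zero, C_smul_X_smul,
          map_add, add_sub_add_right_eq_sub] }

theorem coe_evalInduced :
    ⇑(D.evalInduced M) = evalEnd (DistribMulAction.toAddMonoidEnd _ M D.X) := by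
  let T := DistribMulAction.toAddMonoidEnd _ M D.X
  refine congrArg DFunLike.coe (Induced.addHom_ext (f := (D.evalInduced M).toAddMonoidHom)
    (g := evalEnd T) fun i m => ?_)
  have hT : (T ^ i) m = D.X ^ i • (m : M) :=
    DFunLike.congr_fun (map_pow (DistribMulAction.toAddMonoidEnd _ M) D.X i).symm m
  exact (Induced.lift_single D _ i m).trans (hT.symm.trans (evalEnd_single T i m).symm)

theorem shiftInduced_single (i : ℕ) (m : M) :
    D.shiftInduced M (Induced.single D (M := D.twistedRestriction M) i m) =
      D.restrictionSingle M (i + 1) m - D.restrictionSingle M i (D.X • m) := by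
  have : D.X ^ i • (D.restrictionSingle M 1 m - D.restrictionSingle M 0 (D.X • m)) =
      D.restrictionSingle M (i + 1) m - D.restrictionSingle M i (D.X • m) := by
    rw [smul_sub, X_pow_smul_restrictionSingle, X_pow_smul_restrictionSingle, add_zero]
  exact (Induced.lift_single D (M := D.twistedRestriction M) _ i m).trans this

theorem coe_shiftInduced :
    ⇑(D.shiftInduced M) = shiftSub (DistribMulAction.toAddMonoidEnd _ M D.X) := by
  let T := DistribMulAction.toAddMonoidEnd _ M D.X
  refine congrArg DFunLike.coe (Induced.addHom_ext (f := (D.shiftInduced M).toAddMonoidHom)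
    (g := shiftSub T) fun i m => ?_)
  exact (D.shiftInduced_single M i m).trans (shiftSub_single T i m).symm

theorem shiftInduced_evalInduced_exact :
    Function.Exact (D.shiftInduced M) (D.evalInduced M) := by
  rw [coe_evalInduced, coe_shiftInduced]
  exact shiftSub_evalEnd_exact _

/-- The characteristic sequence `0 ⟶ Induced (M twisted by σ) ⟶ Induced M ⟶ M ⟶ 0`. -/
def characteristicSequence : ShortComplex (ModuleCat.{v} D.Extension) :=
  ShortComplex.mk (ModuleCat.ofHom (D.shiftInduced M)) (ModuleCat.ofHom (D.evalInduced M)) <|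
    ModuleCat.hom_ext <| LinearMap.ext (D.shiftInduced_evalInduced_exact M).apply_apply_eq_zero

theorem characteristicSequence_shortExact : (D.characteristicSequence M).ShortExact :=
  have inj : Function.Injective (D.shiftInduced M) := by
    rw [coe_shiftInduced]
    exact shiftSub_injective _
  have surj : Function.Surjective (D.evalInduced M) := by
    rw [coe_evalInduced]
    exact evalEnd_surjective _
  ModuleCat.shortComplex_shortExact _ (D.shiftInduced_evalInduced_exact M) inj surj

end CharacteristicSequence

theorem hasGlobalDimensionLE_extension [Small.{v} A] {d : ℕ} (hA : HasGlobalDimensionLE.{v} A d) :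
    HasGlobalDimensionLE.{v} D.Extension (d + 1) := by
  intro M
  have induced (N : ModuleCat.{v} A) : HasProjectiveDimensionLE (D.inducedFunctor.obj N) d :=
    have := hA N
    hasProjectiveDimensionLE_obj_of_adjunction D.inducedAdjunction d N
  have h₁ : HasProjectiveDimensionLE (D.characteristicSequence M).X₁ d := induced _
  have h₂ : HasProjectiveDimensionLE (D.characteristicSequence M).X₂ d := induced _
  exact (D.characteristicSequence_shortExact M).hasProjectiveDimensionLT_X₃ (d + 1) h₁
    (hasProjectiveDimensionLT_of_ge _ (d + 1) (d + 2) (by lia))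

end OreDatum

/-! ### The q-Heisenberg algebra as an iterated Ore extension -/

namespace QHeisenberg

section HeisenbergTriple

variable {K : Type*} [Field K] {q : K} {E F G : Type*} [Ring E] [Algebra K E] [Ring F] [Algebra K F]
  [Ring G] [Algebra K G]

/-- A triple of elements of a `K`-algebra that satisfies the relations of `𝔥₁(q)`. -/
@[ext]
structure HeisenbergTriple (q : K) (E : Type*) [Ring E] [Algebra K E] where
  x : E
  y : E
  z : E
  x_mul_z : x * z = q • (z * x)
  y_mul_z : y * z = q⁻¹ • (z * y)
  x_mul_y : x * y = q⁻¹ • (y * x) + z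

namespace HeisenbergTriple

/-- The set `{x, y, z}` of elements of a Heisenberg triple. -/
def gens (t : HeisenbergTriple q E) : Set E := {t.x, t.y, t.z}

theorem forall_mem_gens {t : HeisenbergTriple q E} {P : E → Prop} :
    (∀ u ∈ t.gens, P u) ↔ P t.x ∧ P t.y ∧ P t.z := by
  simp [gens]

/-- The image of a Heisenberg triple under a homomorphism. -/
@[simps x y z]
def map (t : HeisenbergTriple q E) (f : E →ₐ[K] F) : HeisenbergTriple q F where
  x := f t.x
  y := f t.y
  z := f t.z
  x_mul_z := by rw [← map_mul, t.x_mul_z, map_smul, map_mul]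
  y_mul_z := by rw [← map_mul, t.y_mul_z, map_smul, map_mul]
  x_mul_y := by rw [← map_mul, t.x_mul_y, map_add, map_smul, map_mul]

theorem map_comp (t : HeisenbergTriple q E) (f : E →ₐ[K] F) (g : F →ₐ[K] G) :
    t.map (g.comp f) = (t.map f).map g :=
  rfl

theorem forall_mem_gens_map {t : HeisenbergTriple q E} {f : E →ₐ[K] F} {P : F → Prop} :
    (∀ u ∈ (t.map f).gens, P u) ↔ ∀ u ∈ t.gens, P (f u) := by
  simp [forall_mem_gens]

end HeisenbergTriple

end HeisenbergTriple

section HeisenbergExtension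

variable (K : Type w) (A : Type u) [Field K] [Ring A] [Algebra K A]

/-- The Ore datum of `A[z]`. -/
abbrev zDatum : OreDatum K A :=
  OreDatum.ofAlgHom (AlgHom.id K A)

variable {K}

/-- The endomorphism `z ↦ c z` of `A[z]`. -/
def zScale (c : K) : (zDatum K A).Extension →ₐ[K] (zDatum K A).Extension :=
  (zDatum K A).scale (AlgHom.id K A) c (fun _ => rfl) (fun _ => smul_zero c)

variable {A} in
@[simp]
theorem zScale_C (c : K) (a : A) : zScale A c ((zDatum K A).C a) = (zDatum K A).C a :=
  (zDatum K A).scale_C ..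

@[simp]
theorem zScale_X (c : K) : zScale A c (zDatum K A).X = c • (zDatum K A).X :=
  (zDatum K A).scale_X ..

variable {A} in
@[simp]
theorem zScale_zScale (c d : K) (u : (zDatum K A).Extension) :
    zScale A c (zScale A d u) = zScale A (d * c) u := by
  suffices (zScale A c).comp (zScale A d) = zScale A (d * c) from DFunLike.congr_fun this u
  refine (zDatum K A).algHom_ext (fun a => ?_) ?_
  · simp
  · simp [mul_smul]

variable {A} in
@[simp]
theorem zScale_one (u : (zDatum K A).Extension) : zScale A (1 : K) u = u := by
  suffices zScale A (1 : K) = AlgHom.id K _ from DFunLike.congr_fun this u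
  refine (zDatum K A).algHom_ext (fun a => ?_) ?_
  · simp
  · simp

variable {A} in
theorem commute_zDatum_X (u : (zDatum K A).Extension) : Commute u (zDatum K A).X := by
  have : u ∈ Subalgebra.centralizer K {(zDatum K A).X} := by
    refine (zDatum K A).mem_of_C_mem_of_X_mem (fun a => ?_) ?_ u
    · simp [Subalgebra.mem_centralizer_iff, OreDatum.C_mul_X]
    · simp [Subalgebra.mem_centralizer_iff]
  exact ((Subalgebra.mem_centralizer_iff K).1 this _ rfl).symm

/-- The Ore datum of `A[z][y]` over `A[z]`, given by `z y = q y z`. -/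
abbrev yDatum (q : K) : OreDatum K (zDatum K A).Extension :=
  OreDatum.ofAlgHom (zScale A q)

/-- The endomorphism `z ↦ q⁻¹ z`, `y ↦ q y` of `A[z][y]`. -/
def yzScale (q : K) : (yDatum A q).Extension →ₐ[K] (yDatum A q).Extension :=
  (yDatum A q).scale (zScale A q⁻¹) q
    (fun u => by simp [mul_comm]) (fun u => by simp)

@[simp]
theorem yzScale_C (q : K) (u : (zDatum K A).Extension) :
    yzScale A q ((yDatum A q).C u) = (yDatum A q).C (zScale A q⁻¹ u) :=
  (yDatum A q).scale_C ..

@[simp]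
theorem yzScale_X (q : K) : yzScale A q (yDatum A q).X = q • (yDatum A q).X :=
  (yDatum A q).scale_X ..

variable {q : K}

theorem C_mul_neg_smul_C_X (hq : q ≠ 0) (u : (zDatum K A).Extension) :
    (yDatum A q).C u * -(q • (yDatum A q).C (zDatum K A).X) =
      -(q • (yDatum A q).C (zDatum K A).X) *
        yzScale A q ((yDatum A q).C ((yDatum A q).σ u)) := by
  simp [hq, ← map_mul, (commute_zDatum_X u).eq]

variable (hq : q ≠ 0)

/-- The Ore datum of `A[z][y][x]` over `A[z][y]`, given by `z x = q⁻¹ x z` and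
`y x = q x y - q z`. -/
abbrev xDatum : OreDatum K (yDatum A q).Extension :=
  OreDatum.extend (C_mul_neg_smul_C_X A hq)

/-- The extension of `A` by a Heisenberg triple `x, y, z` that commutes with `A`. -/
abbrev HeisenbergExtension : Type (max u w) := (xDatum A hq).Extension

namespace HeisenbergExtension

/-- The inclusion of the coefficient algebra. -/
def ι : A →ₐ[K] HeisenbergExtension A hq :=
  ((xDatum A hq).C.comp (yDatum A q).C).comp (zDatum K A).C

/-- The Heisenberg triple adjoined to `A`. -/
@[simps x y z]
def triple : HeisenbergTriple q (HeisenbergExtension A hq) where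
  x := (xDatum A hq).X
  y := (xDatum A hq).C (yDatum A q).X
  z := (xDatum A hq).C ((yDatum A q).C (zDatum K A).X)
  x_mul_z := by simp [OreDatum.C_mul_X, hq]
  y_mul_z := by rw [← map_mul, ← map_mul, OreDatum.C_mul_X]; simp [hq]
  x_mul_y := by simp [OreDatum.C_mul_X, hq]

theorem commute_ι (a : A) : ∀ u ∈ (triple A hq).gens, Commute (ι A hq a) u := by
  simp [HeisenbergTriple.forall_mem_gens, ι, Commute, SemiconjBy, OreDatum.C_mul_X, ← map_mul]

variable {A hq} {E : Type*} [Ring E] [Algebra K E]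

theorem algHom_ext {f g : HeisenbergExtension A hq →ₐ[K] E}
    (hι : f.comp (ι A hq) = g.comp (ι A hq)) (ht : (triple A hq).map f = (triple A hq).map g) :
    f = g := by
  obtain ⟨hx, hy, hz⟩ := HeisenbergTriple.ext_iff.1 ht
  refine (xDatum A hq).algHom_ext (fun u => ?_) hx
  suffices f.comp (xDatum A hq).C = g.comp (xDatum A hq).C from DFunLike.congr_fun this u
  refine (yDatum A q).algHom_ext (fun u => ?_) hy
  suffices (f.comp (xDatum A hq).C).comp (yDatum A q).C =
      (g.comp (xDatum A hq).C).comp (yDatum A q).C from DFunLike.congr_fun this u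
  exact (zDatum K A).algHom_ext (DFunLike.congr_fun hι) hz

variable (g : A →ₐ[K] E) (t : HeisenbergTriple q E) (h : ∀ a, ∀ u ∈ t.gens, Commute (g a) u)

/-- The part of `lift` that is defined on `A[z]`. -/
def liftZ : (zDatum K A).Extension →ₐ[K] E :=
  (zDatum K A).lift g t.z fun a => by
    simpa using (h a t.z (by simp [HeisenbergTriple.gens])).eq

/-- The part of `lift` that is defined on `A[z][y]`. -/
def liftY (hq : q ≠ 0) : (yDatum A q).Extension →ₐ[K] E :=
  (yDatum A q).lift (liftZ g t h) t.y <| by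
    refine (zDatum K A).mem_of_C_mem_of_X_mem (S := (yDatum A q).skewCommutant _ _) ?_ ?_
    · intro a
      simpa [liftZ, OreDatum.mem_skewCommutant] using (h a t.y (by simp [HeisenbergTriple.gens])).eq
    · simp [liftZ, OreDatum.mem_skewCommutant, t.y_mul_z, hq]

/-- The universal property of the Heisenberg extension. -/
def lift : HeisenbergExtension A hq →ₐ[K] E :=
  (xDatum A hq).lift (liftY g t h hq) t.x <| by
    let S := (xDatum A hq).skewCommutant (liftY g t h hq) t.x
    refine (yDatum A q).mem_of_C_mem_of_X_mem (S := S) (fun u => ?_) ?_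
    · refine (zDatum K A).mem_of_C_mem_of_X_mem (S := S.comap (yDatum A q).C) (fun a => ?_) ?_ u
      · simpa [S, liftZ, liftY, OreDatum.mem_skewCommutant]
          using (h a t.x (by simp [HeisenbergTriple.gens])).eq
      · simp [S, liftZ, liftY, OreDatum.mem_skewCommutant, t.x_mul_z, hq]
    · simp [S, liftZ, liftY, OreDatum.mem_skewCommutant, t.x_mul_y, hq]

theorem lift_comp_ι : (lift (hq := hq) g t h).comp (ι A hq) = g := by
  ext a
  simp [lift, liftY, liftZ, ι]

theorem triple_map_lift : (triple A hq).map (lift g t h) = t := by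
  ext <;> simp [lift, liftY, liftZ]

end HeisenbergExtension

variable {A} in
theorem hasGlobalDimensionLE_heisenbergExtension {d : ℕ}
    (hA : HasGlobalDimensionLE.{max u w v} A d) :
    HasGlobalDimensionLE.{max u w v} (HeisenbergExtension A hq) (d + 3) :=
  have hz := OreDatum.hasGlobalDimensionLE_extension.{u, max u w v} (zDatum K A) hA
  have hy := OreDatum.hasGlobalDimensionLE_extension.{max u w, max u w v} (yDatum A q) hz
  OreDatum.hasGlobalDimensionLE_extension.{max u w, max u w v} (xDatum A hq) hy

end HeisenbergExtension

section Heisenberg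

variable {n : ℕ} {q : ℂ}

/-- The `i`-th Heisenberg triple of `𝔥_n(q)`. -/
@[simps x y z]
def triple (n : ℕ) (q : ℂ) (i : Fin n) : HeisenbergTriple q (H n q) where
  x := X n q i
  y := Y n q i
  z := Z n q i
  x_mul_z := by simpa [X, Z] using RingQuot.mkAlgHom_rel ℂ (Rel.xz (q := q) i)
  y_mul_z := by simpa [Y, Z] using RingQuot.mkAlgHom_rel ℂ (Rel.yz (q := q) i)
  x_mul_y := by simpa [X, Y, Z] using RingQuot.mkAlgHom_rel ℂ (Rel.xy (q := q) i)

theorem commute_triple {i j : Fin n} (hij : i ≠ j) :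
    ∀ u ∈ (triple n q i).gens, ∀ v ∈ (triple n q j).gens, Commute u v := by
  have comm {a b : FreeAlgebra ℂ (GenIdx n)} (h : Rel n q (a * b) (b * a)) :
      Commute (RingQuot.mkAlgHom ℂ (Rel n q) a) (RingQuot.mkAlgHom ℂ (Rel n q) b) :=
    (map_mul _ _ _).symm.trans ((RingQuot.mkAlgHom_rel ℂ h).trans (map_mul _ _ _))
  simp only [HeisenbergTriple.forall_mem_gens, triple_x, triple_y, triple_z]
  exact ⟨⟨comm (.xx i j), comm (.xyne i j hij), comm (.xzne i j hij)⟩,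
    ⟨(comm (.xyne j i hij.symm)).symm, comm (.yy i j), comm (.yzne i j hij)⟩,
    ⟨(comm (.xzne j i hij.symm)).symm, (comm (.yzne j i hij.symm)).symm, comm (.zz i j)⟩⟩

theorem mem_of_gens_subset {S : Subalgebra ℂ (H n q)} (hS : ∀ i, (triple n q i).gens ⊆ S)
    (a : H n q) : a ∈ S := by
  obtain ⟨a, rfl⟩ := RingQuot.mkAlgHom_surjective ℂ (Rel n q) a
  induction a using FreeAlgebra.induction with
  | grade0 r => rw [AlgHom.commutes]; exact S.algebraMap_mem r
  | grade1 i =>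
    obtain i | i | i := i
    · exact hS i (by simp [HeisenbergTriple.gens, X, fX])
    · exact hS i (by simp [HeisenbergTriple.gens, Y, fY])
    · exact hS i (by simp [HeisenbergTriple.gens, Z, fZ])
  | mul a b ha hb => rw [map_mul]; exact mul_mem ha hb
  | add a b ha hb => rw [map_add]; exact add_mem ha hb

variable {E : Type*} [Ring E] [Algebra ℂ E]

theorem algHom_ext {f g : H n q →ₐ[ℂ] E} (h : ∀ i, (triple n q i).map f = (triple n q i).map g) :
    f = g := by
  refine AlgHom.ext fun a => mem_of_gens_subset (S := AlgHom.equalizer f g) (fun i => ?_) a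
  obtain ⟨hx, hy, hz⟩ := HeisenbergTriple.ext_iff.1 (h i)
  exact HeisenbergTriple.forall_mem_gens.2 ⟨hx, hy, hz⟩

variable (t : Fin n → HeisenbergTriple q E)
  (ht : ∀ ⦃i j⦄, i ≠ j → ∀ u ∈ (t i).gens, ∀ v ∈ (t j).gens, Commute u v)

/-- The universal property of `𝔥_n(q)`: it is generated by `n` mutually commuting Heisenberg
triples. -/
def lift : H n q →ₐ[ℂ] E :=
  RingQuot.liftAlgHom ℂ ⟨FreeAlgebra.lift ℂ <|
    Sum.elim (fun i => (t i).x) (Sum.elim (fun i => (t i).y) fun i => (t i).z), by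
      simp only [HeisenbergTriple.forall_mem_gens] at ht
      rintro _ _ (⟨i, j⟩ | ⟨i, j⟩ | ⟨i, j⟩ | ⟨i⟩ | ⟨i⟩ | ⟨i⟩ | ⟨_, _, hij⟩ | ⟨_, _, hij⟩ |
        ⟨_, _, hij⟩)
      all_goals simp only [fX, fY, fZ, map_add, map_mul, map_smul, FreeAlgebra.lift_ι_apply,
        Sum.elim_inl, Sum.elim_inr]
      · obtain rfl | hij := eq_or_ne i j
        exacts [rfl, (ht hij).1.1]
      · obtain rfl | hij := eq_or_ne i j
        exacts [rfl, (ht hij).2.1.2.1]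
      · obtain rfl | hij := eq_or_ne i j
        exacts [rfl, (ht hij).2.2.2.2]
      exacts [(t i).x_mul_z, (t i).y_mul_z, (t i).x_mul_y, (ht hij).1.2.1, (ht hij).1.2.2,
        (ht hij).2.1.2.2]⟩

theorem triple_map_lift (i : Fin n) : (triple n q i).map (lift t ht) = t i := by
  ext <;> exact (RingQuot.liftAlgHom_mkAlgHom_apply ℂ _ _ _).trans (FreeAlgebra.lift_ι_apply _ _)

theorem commute_lift {u : E} (hu : ∀ i, ∀ v ∈ (t i).gens, Commute v u) (a : H n q) :
    Commute (lift t ht a) u := by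
  have ha : a ∈ (Subalgebra.centralizer ℂ {u}).comap (lift t ht) := by
    have hgens (i) : ∀ v ∈ ((triple n q i).map (lift t ht)).gens, Commute v u := by
      simpa only [triple_map_lift] using hu i
    refine mem_of_gens_subset (fun i v hv => ?_) a
    refine (Subalgebra.mem_centralizer_iff ℂ).2 ?_
    simpa using (HeisenbergTriple.forall_mem_gens_map.1 (hgens i) v hv).symm.eq
  exact ((Subalgebra.mem_centralizer_iff ℂ).1 ha u rfl).symm

section succEquiv

variable (n) (hq : q ≠ 0)

/-- The `n + 1` commuting Heisenberg triples of `𝔥_n(q)[z][y][x]`, the adjoined one coming first. -/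
def extensionTriple : Fin (n + 1) → HeisenbergTriple q (HeisenbergExtension (H n q) hq) :=
  Fin.cons (HeisenbergExtension.triple (H n q) hq)
    fun i => (triple n q i).map (HeisenbergExtension.ι (H n q) hq)

theorem commute_extensionTriple ⦃i j : Fin (n + 1)⦄ (hij : i ≠ j) :
    ∀ u ∈ (extensionTriple n hq i).gens, ∀ v ∈ (extensionTriple n hq j).gens, Commute u v := by
  cases i using Fin.cases with
  | zero => cases j using Fin.cases with
    | zero => exact absurd rfl hij
    | succ j =>
      exact fun u hu => HeisenbergTriple.forall_mem_gens_map.2 fun v _ =>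
        (HeisenbergExtension.commute_ι _ hq v u hu).symm
  | succ i => cases j using Fin.cases with
    | zero =>
      exact HeisenbergTriple.forall_mem_gens_map.2 fun u _ =>
        HeisenbergExtension.commute_ι _ hq u
    | succ j =>
      have hij : i ≠ j := fun h => hij (h ▸ rfl)
      exact HeisenbergTriple.forall_mem_gens_map.2 fun u hu =>
        HeisenbergTriple.forall_mem_gens_map.2 fun v hv => (commute_triple hij u hu v hv).map _

/-- The homomorphism `𝔥_{n+1}(q) → 𝔥_n(q)[z][y][x]` that sends the first Heisenberg triple to the
adjoined one. -/
def toHeisenbergExtension : H (n + 1) q →ₐ[ℂ] HeisenbergExtension (H n q) hq :=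
  lift (extensionTriple n hq) (commute_extensionTriple n hq)

/-- The homomorphism `𝔥_n(q)[z][y][x] → 𝔥_{n+1}(q)` inverse to `toHeisenbergExtension`. -/
def ofHeisenbergExtension : HeisenbergExtension (H n q) hq →ₐ[ℂ] H (n + 1) q :=
  HeisenbergExtension.lift
    (lift (fun i => triple (n + 1) q i.succ) fun _ _ hij => commute_triple (by simpa using hij))
    (triple (n + 1) q 0)
    fun a u hu => commute_lift _ _ (fun i v hv => commute_triple i.succ_ne_zero v hv u hu) a

theorem extensionTriple_map_ofHeisenbergExtension (i : Fin (n + 1)) :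
    (extensionTriple n hq i).map (ofHeisenbergExtension n hq) = triple (n + 1) q i := by
  cases i using Fin.cases with
  | zero => exact HeisenbergExtension.triple_map_lift ..
  | succ i =>
    rw [extensionTriple, Fin.cons_succ, ← HeisenbergTriple.map_comp, ofHeisenbergExtension,
      HeisenbergExtension.lift_comp_ι, triple_map_lift]

theorem triple_map_toHeisenbergExtension (i : Fin (n + 1)) :
    (triple (n + 1) q i).map (toHeisenbergExtension n hq) = extensionTriple n hq i :=
  triple_map_lift ..

theorem extensionTriple_map_toHeisenbergExtension_comp (i : Fin (n + 1)) :
    (extensionTriple n hq i).map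
        ((toHeisenbergExtension n hq).comp (ofHeisenbergExtension n hq)) =
      extensionTriple n hq i := by
  rw [HeisenbergTriple.map_comp, extensionTriple_map_ofHeisenbergExtension,
    triple_map_toHeisenbergExtension]

/-- The isomorphism `𝔥_{n+1}(q) ≃ 𝔥_n(q)[z][y][x]`. -/
def succEquiv : H (n + 1) q ≃ₐ[ℂ] HeisenbergExtension (H n q) hq :=
  AlgEquiv.ofAlgHom (toHeisenbergExtension n hq) (ofHeisenbergExtension n hq)
    (HeisenbergExtension.algHom_ext
      (algHom_ext fun i => extensionTriple_map_toHeisenbergExtension_comp n hq i.succ)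
      (extensionTriple_map_toHeisenbergExtension_comp n hq 0))
    (algHom_ext fun i => by
      rw [HeisenbergTriple.map_comp, triple_map_toHeisenbergExtension,
        extensionTriple_map_ofHeisenbergExtension]
      rfl)

end succEquiv

/-- The algebra `𝔥_0(q)` is the field of scalars. -/
def zeroEquiv (q : ℂ) : H 0 q ≃ₐ[ℂ] ℂ :=
  AlgEquiv.ofAlgHom (lift finZeroElim fun i => i.elim0) (Algebra.ofId ℂ (H 0 q))
    (Subsingleton.elim _ _) (algHom_ext fun i => i.elim0)

theorem hasGlobalDimensionLE (hq : q ≠ 0) (n : ℕ) :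
    HasGlobalDimensionLE.{v} (H n q) (3 * n) := by
  induction n with
  | zero =>
    exact HasGlobalDimensionLE.of_ringEquiv.{v} (zeroEquiv q).symm.toRingEquiv
      (HasGlobalDimensionLE.of_divisionRing ℂ)
  | succ n ih =>
    exact HasGlobalDimensionLE.of_ringEquiv.{v} (succEquiv n hq).symm.toRingEquiv
      (hasGlobalDimensionLE_heisenbergExtension.{0, v, 0} hq ih)

end Heisenberg

open CategoryTheory

theorem globalDimension_le_three_n_general (n : ℕ) (q : ℂ) (hq : q ≠ 0) (M : ModuleCat (H n q)) :
    HasProjResLengthLE M (3 * n) :=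
  have := hasGlobalDimensionLE hq n M
  exists_projectiveResolution_isZero_of_hasProjectiveDimensionLE (3 * n) M

/-- For `n ≥ 1` and `q ∈ ℂ` nonzero and not a root of unity, the global
dimension of `𝔥_n(q)` is at most `3n`: every left `𝔥_n(q)`-module admits a projective
resolution of length at most `3n`. -/
theorem globalDimension_le_three_n (n : ℕ) (hn : 1 ≤ n) (q : ℂ) (hq : q ≠ 0)
    (hq' : NotRootOfUnity q) (M : ModuleCat (H n q)) :
    HasProjResLengthLE M (3 * n) :=
  globalDimension_le_three_n_general n q hq M

end QHeisenberg
end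
end

section
/- Let n ≥ 1 and q ∈ ℂ nonzero. For every d ∈ ℕ, the ℂ-subspace F_d of 𝔥_n(q) spanned by 1 together with all products of at most d generators is finite-dimensional of dimension Nat.choose (d + 3n) (3n). Consequently, for d ≥ 1 one has dim F_d − dim F_{d−1} = Nat.choose (d + 3n − 1) (3n − 1), so 𝔥_n(q) has polynomial growth of degree 3n and Hilbert series (1 − t)^{−3n}. -/
noncomputable section

open scoped BigOperators

namespace QHeisenberg

/-- The generating set `{x_i, y_i, z_i : 1 ≤ i ≤ n}` of `𝔥_n(q)`. -/
def genSet (n : ℕ) (q : ℂ) : Set (H n q) :=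
  Set.range (X n q) ∪ Set.range (Y n q) ∪ Set.range (Z n q)

/-- `F_d`: the `ℂ`-linear span of `1` together with all products of at most `d`
generators of `𝔥_n(q)` (the empty product being `1`). -/
def filtration (n : ℕ) (q : ℂ) (d : ℕ) : Submodule ℂ (H n q) :=
  Submodule.span ℂ
    {w | ∃ l : List (H n q), (∀ x ∈ l, x ∈ genSet n q) ∧ l.length ≤ d ∧ w = l.prod}

end QHeisenberg

/-!
Any two generators commute up to a unit and words of length less than two, so sorting a word changes
it by a unit and shorter words; by induction on the length `F_d` is spanned by the ordered monomials
of degree at most `d`. For the lower bound, `𝔥_1(q)` acts on the free vector space on the monomials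
`zᶜ yᵇ xᵃ` by its multiplication rules, and `𝔥_n(q)` acts on the `n`-th tensor power of this space.
Every generator sends a basis vector to a nonzero multiple of the basis vector with one more letter,
up to lower degree, so `F_d` maps the vacuum vector onto all basis vectors of degree at most `d`.
There are as many of them as multisets of at most `d` letters out of `3n`.
-/

section EndAt

variable {k ι : Type*} {M : ι → Type*} [CommSemiring k] [DecidableEq ι]
  [∀ i, AddCommMonoid (M i)] [∀ i, Module k (M i)]

open scoped TensorProduct

/-- The action of an endomorphism of the `i`-th factor on a tensor product, by the identity on all
other factors. -/
def endAt (i : ι) : Module.End k (M i) →ₐ[k] Module.End k (⨂[k] j, M j) :=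
  AlgHom.ofLinearMap ((PiTensorProduct.mapMultilinear k M M).toLinearMap 1 i)
    (map_one (PiTensorProduct.mapMonoidHom.comp (MonoidHom.mulSingle _ i)))
    (map_mul (PiTensorProduct.mapMonoidHom.comp (MonoidHom.mulSingle _ i)))

theorem endAt_tprod (i : ι) (T : Module.End k (M i)) (v : ∀ j, M j) :
    endAt i T (PiTensorProduct.tprod k v) =
      PiTensorProduct.tprod k (Function.update v i (T (v i))) := by
  refine (PiTensorProduct.map_tprod _ v).trans (congrArg _ (funext fun j => ?_))
  rcases eq_or_ne j i with rfl | hj <;> simp [*]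

theorem commute_endAt {i j : ι} (hij : i ≠ j) (S : Module.End k (M i)) (T : Module.End k (M j)) :
    Commute (endAt i S) (endAt j T) :=
  (Pi.mulSingle_commute (f := fun i => Module.End k (M i)) hij S T).map
    PiTensorProduct.mapMonoidHom

theorem commute_endAt_self {V : Type*} [AddCommMonoid V] [Module k V] (T : Module.End k V)
    (i j : ι) : Commute (endAt (M := fun _ => V) i T) (endAt (M := fun _ => V) j T) := by
  rcases eq_or_ne i j with rfl | hij
  · exact Commute.refl _
  · exact commute_endAt (M := fun _ => V) hij T T

end EndAt

section SpanCardLT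

variable (k : Type*) {V ι : Type*}

/-- The span of the part of degree less than `d` of a family indexed by multisets, the degree being
the cardinality. -/
def spanCardLT [Semiring k] [AddCommMonoid V] [Module k V] (f : Multiset ι → V) (d : ℕ) :
    Submodule k V :=
  Submodule.span k (Set.range fun m : {m : Multiset ι // m.card < d} => f m)

/-- Multisets of bounded cardinality, sorted by their cardinality. -/
def multisetCardLTEquiv (ι : Type*) (d : ℕ) :
    {m : Multiset ι // m.card < d} ≃ Σ j : Fin d, Sym ι j where
  toFun m := ⟨⟨m.1.card, m.2⟩, ⟨m.1, rfl⟩⟩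
  invFun p := ⟨p.2.1, p.2.2.trans_lt p.1.2⟩
  left_inv _ := rfl
  right_inv := by
    rintro ⟨⟨j, hj⟩, ⟨m, hm⟩⟩
    obtain rfl : m.card = j := hm
    rfl

instance [Finite ι] (d : ℕ) : Finite {m : Multiset ι // m.card < d} := by
  classical
  have := Fintype.ofFinite ι
  exact .of_equiv _ (multisetCardLTEquiv ι d).symm

theorem card_multiset_card_lt_succ [Finite ι] (d : ℕ) :
    Nat.card {m : Multiset ι // m.card < d + 1} =
      (d + Nat.card ι).choose (Nat.card ι) := by
  classical
  have := Fintype.ofFinite ι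
  rw [Nat.card_congr (multisetCardLTEquiv ι (d + 1)), Nat.card_eq_fintype_card, Fintype.card_sigma,
    Nat.card_eq_fintype_card]
  simp only [Sym.card_sym_eq_multichoose]
  rw [Fin.sum_univ_eq_sum_range fun j => (Fintype.card ι).multichoose j,
    Nat.sum_range_multichoose]

variable {k}

section Semiring

variable [Semiring k] [AddCommMonoid V] [Module k V] {f : Multiset ι → V}

theorem mem_spanCardLT {m : Multiset ι} {d : ℕ} (hm : m.card < d) : f m ∈ spanCardLT k f d :=
  Submodule.subset_span ⟨⟨m, hm⟩, rfl⟩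

theorem spanCardLT_le {d : ℕ} {P : Submodule k V} :
    spanCardLT k f d ≤ P ↔ ∀ m : Multiset ι, m.card < d → f m ∈ P := by
  simp [spanCardLT, Submodule.span_le, Set.range_subset_iff]

theorem spanCardLT_mono : Monotone (spanCardLT k f) := fun _ _ hde =>
  spanCardLT_le.2 fun _ hm => mem_spanCardLT (hm.trans_le hde)

end Semiring

section Field

variable [Field k] [AddCommGroup V] [Module k V] [Finite ι] (f : Multiset ι → V) (d : ℕ)

instance : FiniteDimensional k (spanCardLT k f d) :=
  FiniteDimensional.span_of_finite k (Set.finite_range _)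

theorem finrank_spanCardLT_succ_le :
    Module.finrank k (spanCardLT k f (d + 1)) ≤
      (d + Nat.card ι).choose (Nat.card ι) := by
  have := Fintype.ofFinite {m : Multiset ι // m.card < d + 1}
  rw [← card_multiset_card_lt_succ, Nat.card_eq_fintype_card]
  exact finrank_range_le_card _

variable {f} in
theorem finrank_spanCardLT_succ (hf : LinearIndependent k f) :
    Module.finrank k (spanCardLT k f (d + 1)) =
      (d + Nat.card ι).choose (Nat.card ι) := by
  have := Fintype.ofFinite {m : Multiset ι // m.card < d + 1}
  rw [← card_multiset_card_lt_succ, Nat.card_eq_fintype_card]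
  exact finrank_span_eq_card (hf.comp _ Subtype.val_injective)

end Field

end SpanCardLT

section WordSpan

variable (k : Type*) {A ι : Type*}

/-- The span of all products of fewer than `d` factors from the family `g`. The inequality is
strict so that the words shorter than one of length `d` span `wordSpan k g d`, also for `d = 0`. -/
def wordSpan [CommSemiring k] [Semiring A] [Algebra k A] (g : ι → A) (d : ℕ) : Submodule k A :=
  Submodule.span k ((fun l : List ι => (l.map g).prod) '' {l | l.length < d})

/-- The monomial with exponents given by the multiset `m`, its factors being taken in the order in
which `Multiset.toList` happens to list them. -/
def orderedWord [Monoid A] (g : ι → A) (m : Multiset ι) : A :=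
  (m.toList.map g).prod

/-- The members `g s` and `g t` of the family `g` commute up to a unit and words of length less than
two. -/
def QuasiCommutes [CommRing k] [Ring A] [Algebra k A] (g : ι → A) (s t : ι) : Prop :=
  ∃ c : kˣ, g s * g t - c • (g t * g s) ∈ wordSpan k g 2

variable {k}

section Semiring

variable [CommSemiring k] [Semiring A] [Algebra k A] {g : ι → A}

theorem list_prod_mem_wordSpan {l : List ι} {d : ℕ} (hl : l.length < d) :
    (l.map g).prod ∈ wordSpan k g d :=
  Submodule.subset_span ⟨l, hl, rfl⟩

theorem apply_mem_wordSpan (s : ι) : g s ∈ wordSpan k g 2 := by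
  simpa using list_prod_mem_wordSpan (k := k) (g := g) (l := [s]) one_lt_two

theorem wordSpan_mono : Monotone (wordSpan k g) := fun _ _ hde =>
  Submodule.span_mono (Set.image_mono fun _ hl => hl.trans_le hde)

theorem mul_mem_wordSpan {a b : A} {d e : ℕ} (ha : a ∈ wordSpan k g (d + 1))
    (hb : b ∈ wordSpan k g e) : a * b ∈ wordSpan k g (d + e) := by
  have hab := Submodule.mul_mem_mul ha hb
  rw [wordSpan, wordSpan, Submodule.span_mul_span] at hab
  refine Submodule.span_mono ?_ hab
  rintro _ ⟨_, ⟨l, hl, rfl⟩, _, ⟨l', hl', rfl⟩, rfl⟩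
  refine ⟨l ++ l', ?_, by simp⟩
  simp only [Set.mem_ofPred_eq, List.length_append] at hl hl' ⊢
  lia

theorem wordSpan_eq_span_of_range_eq {S : Set A} (hS : Set.range g = S) (d : ℕ) :
    wordSpan k g d =
      Submodule.span k {w | ∃ l : List A, (∀ x ∈ l, x ∈ S) ∧ l.length < d ∧ w = l.prod} := by
  subst hS
  refine congrArg (Submodule.span k) ?_
  ext w
  constructor
  · rintro ⟨l, hl, rfl⟩
    exact ⟨l.map g, by simp, by simpa using hl, rfl⟩
  · rintro ⟨l, hmem, hl, rfl⟩
    obtain ⟨l, rfl⟩ : l ∈ Set.range (List.map g) := by rwa [Set.range_list_map]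
    exact ⟨l, by simpa using hl, rfl⟩

end Semiring

section Ring

variable [CommRing k] [Ring A] [Algebra k A] {g : ι → A}

theorem QuasiCommutes.of_commute {s t : ι} (h : Commute (g s) (g t)) : QuasiCommutes k g s t :=
  ⟨1, by simp [h.eq]⟩

theorem QuasiCommutes.symm {s t : ι} (h : QuasiCommutes k g s t) : QuasiCommutes k g t s := by
  obtain ⟨c, hc⟩ := h
  refine ⟨c⁻¹, ?_⟩
  have key : g t * g s - c⁻¹ • (g s * g t) = -((c⁻¹ : kˣ) • (g s * g t - c • (g t * g s))) := by
    rw [smul_sub, inv_smul_smul, neg_sub]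
  rw [key]
  exact neg_mem (Submodule.smul_mem _ _ hc)

theorem exists_sub_smul_mem_wordSpan_of_perm (h : ∀ s t, QuasiCommutes k g s t) {l l' : List ι}
    (hl : l.Perm l') : ∃ c : k, (l.map g).prod - c • (l'.map g).prod ∈ wordSpan k g l.length := by
  induction hl with
  | nil => exact ⟨1, by simp⟩
  | @cons s l l' _ ih =>
    obtain ⟨c, hc⟩ := ih
    refine ⟨c, ?_⟩
    simpa [mul_sub, add_comm] using mul_mem_wordSpan (apply_mem_wordSpan s) hc
  | swap s t l =>
    obtain ⟨c, hc⟩ := h t s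
    refine ⟨c, ?_⟩
    simpa [sub_mul, mul_assoc, add_comm, add_left_comm, Units.smul_def] using
      mul_mem_wordSpan hc (list_prod_mem_wordSpan l.length.lt_succ_self)
  | @trans l₁ l₂ l₃ h₁₂ _ ih₁ ih₂ =>
    obtain ⟨c₁, hc₁⟩ := ih₁
    obtain ⟨c₂, hc₂⟩ := ih₂
    refine ⟨c₁ * c₂, ?_⟩
    rw [← h₁₂.length_eq] at hc₂
    simpa [smul_sub, mul_smul] using add_mem hc₁ (Submodule.smul_mem _ c₁ hc₂)

theorem wordSpan_le_spanCardLT (h : ∀ s t, QuasiCommutes k g s t) (d : ℕ) :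
    wordSpan k g d ≤ spanCardLT k (orderedWord g) d := by
  induction d with
  | zero => simp [wordSpan]
  | succ d ih =>
    refine Submodule.span_le.2 ?_
    rintro _ ⟨l, hl, rfl⟩
    obtain ⟨c, hc⟩ := exists_sub_smul_mem_wordSpan_of_perm h
      (Multiset.coe_eq_coe.1 (Multiset.coe_toList (l : Multiset ι)).symm)
    have lower : (l.map g).prod - c • orderedWord g l ∈ spanCardLT k (orderedWord g) d :=
      ih (wordSpan_mono (Nat.lt_succ_iff.1 hl) hc)
    have leading : orderedWord g l ∈ spanCardLT k (orderedWord g) (d + 1) := mem_spanCardLT hl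
    have hsum := add_mem (spanCardLT_mono d.le_succ lower) (Submodule.smul_mem _ c leading)
    rwa [sub_add_cancel] at hsum

end Ring

section Field

variable [Field k] [Ring A] [Algebra k A] {g : ι → A} {V : Type*} [AddCommGroup V] [Module k V]
  {ρ : A →ₐ[k] Module.End k V} {b : Multiset ι → V}

theorem spanCardLT_le_map_wordSpan
    (hρ : ∀ s m, ∃ c : k, c ≠ 0 ∧ ∃ r ∈ spanCardLT k b (m.card + 1),
      ρ (g s) (b m) = c • b (s ::ₘ m) + r)
    (d : ℕ) :
    spanCardLT k b d ≤ (wordSpan k g d).map (LinearMap.applyₗ (b 0) ∘ₗ ρ.toLinearMap) := by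
  induction d with
  | zero => simp [spanCardLT_le]
  | succ d ih =>
    refine spanCardLT_le.2 fun m hm => ?_
    induction m using Multiset.induction with
    | empty => exact ⟨1, by simpa using list_prod_mem_wordSpan (l := []) d.succ_pos, by simp⟩
    | cons s m _ =>
      have hmd : m.card < d := by simpa using hm
      obtain ⟨a, ha, hab⟩ := ih (mem_spanCardLT hmd)
      obtain ⟨c, hc, r, hr, hcr⟩ := hρ s m
      have lower := Submodule.map_mono (wordSpan_mono d.le_succ) (ih (spanCardLT_mono hmd hr))
      have total : ρ (g s) (b m) ∈
          (wordSpan k g (d + 1)).map (LinearMap.applyₗ (b 0) ∘ₗ ρ.toLinearMap) :=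
        ⟨g s * a, add_comm d 1 ▸ mul_mem_wordSpan (apply_mem_wordSpan s) ha, by simp [← hab]⟩
      have leading := sub_mem total lower
      rwa [hcr, add_sub_cancel_right, Submodule.smul_mem_iff _ hc] at leading

variable [Finite ι]

theorem finiteDimensional_wordSpan (hg : ∀ s t, QuasiCommutes k g s t) (d : ℕ) :
    FiniteDimensional k (wordSpan k g d) :=
  Submodule.finiteDimensional_of_le (wordSpan_le_spanCardLT hg d)

theorem finrank_wordSpan_succ (hg : ∀ s t, QuasiCommutes k g s t) (hb : LinearIndependent k b)
    (hρ : ∀ s m, ∃ c : k, c ≠ 0 ∧ ∃ r ∈ spanCardLT k b (m.card + 1),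
      ρ (g s) (b m) = c • b (s ::ₘ m) + r)
    (d : ℕ) :
    Module.finrank k (wordSpan k g (d + 1)) = (d + Nat.card ι).choose (Nat.card ι) := by
  have := finiteDimensional_wordSpan hg (d + 1)
  apply le_antisymm
  · exact (Submodule.finrank_mono (wordSpan_le_spanCardLT hg _)).trans
      (finrank_spanCardLT_succ_le _ d)
  · rw [← finrank_spanCardLT_succ d hb]
    exact (Submodule.finrank_mono (spanCardLT_le_map_wordSpan hρ _)).trans
      (Submodule.finrank_map_le _ _)

end Field

end WordSpan

section OneVariable

variable {K : Type*} [Field K] (q : K)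

/-- Multiplication by `x` in the case `n = 1`, on the space whose basis vector `(a, b, c)` stands
for the normally ordered monomial `zᶜ yᵇ xᵃ`. The geometric sum arises from moving `x` past `yᵇ`;
it vanishes for `b = 0`, where `b - 1` is truncated. -/
def xAct : Module.End K (ℕ × ℕ × ℕ →₀ K) :=
  Finsupp.linearCombination K fun (a, b, c) =>
    (q ^ c * q⁻¹ ^ b) • Finsupp.single (a + 1, b, c) 1 +
      (q ^ c * ∑ j ∈ Finset.range b, (q⁻¹ ^ 2) ^ j) • Finsupp.single (a, b - 1, c + 1) 1

/-- Multiplication by `y` on the monomials `zᶜ yᵇ xᵃ`. -/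
def yAct : Module.End K (ℕ × ℕ × ℕ →₀ K) :=
  Finsupp.linearCombination K fun (a, b, c) => q⁻¹ ^ c • Finsupp.single (a, b + 1, c) 1

variable (K) in
/-- Multiplication by `z` on the monomials `zᶜ yᵇ xᵃ`. -/
def zAct : Module.End K (ℕ × ℕ × ℕ →₀ K) :=
  Finsupp.linearCombination K fun (a, b, c) => Finsupp.single (a, b, c + 1) 1

theorem xAct_single (a b c : ℕ) :
    xAct q (Finsupp.single (a, b, c) 1) =
      (q ^ c * q⁻¹ ^ b) • Finsupp.single (a + 1, b, c) 1 +
        (q ^ c * ∑ j ∈ Finset.range b, (q⁻¹ ^ 2) ^ j) • Finsupp.single (a, b - 1, c + 1) 1 := by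
  rw [xAct, Finsupp.linearCombination_single, one_smul]

theorem yAct_single (a b c : ℕ) :
    yAct q (Finsupp.single (a, b, c) 1) = q⁻¹ ^ c • Finsupp.single (a, b + 1, c) 1 := by
  rw [yAct, Finsupp.linearCombination_single, one_smul]

theorem zAct_single (a b c : ℕ) :
    zAct K (Finsupp.single (a, b, c) 1) = Finsupp.single (a, b, c + 1) 1 := by
  rw [zAct, Finsupp.linearCombination_single, one_smul]

theorem xAct_mul_zAct : xAct q * zAct K = q • (zAct K * xAct q) := by
  refine Finsupp.basisSingleOne.ext fun ⟨a, b, c⟩ => ?_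
  simp only [Finsupp.coe_basisSingleOne, Module.End.mul_apply, LinearMap.smul_apply, xAct_single,
    zAct_single, map_add, map_smul]
  module

theorem yAct_mul_zAct : yAct q * zAct K = q⁻¹ • (zAct K * yAct q) := by
  refine Finsupp.basisSingleOne.ext fun ⟨a, b, c⟩ => ?_
  simp only [Finsupp.coe_basisSingleOne, Module.End.mul_apply, LinearMap.smul_apply, yAct_single,
    zAct_single, map_smul]
  module

variable {q} in
theorem xAct_mul_yAct (hq : q ≠ 0) : xAct q * yAct q = q⁻¹ • (yAct q * xAct q) + zAct K := by
  refine Finsupp.basisSingleOne.ext fun ⟨a, b, c⟩ => ?_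
  have hqc : q⁻¹ ^ c * q ^ c = 1 := by rw [← mul_pow, inv_mul_cancel₀ hq, one_pow]
  simp only [Finsupp.coe_basisSingleOne, Module.End.mul_apply, LinearMap.smul_apply,
    LinearMap.add_apply, xAct_single, yAct_single, zAct_single, map_add, map_smul,
    Nat.add_sub_cancel, geom_sum_succ]
  cases b with
  | zero =>
    simp only [Finset.sum_range_zero, mul_zero, zero_smul]
    match_scalars
    · ring
    · linear_combination hqc
  | succ b =>
    simp only [Nat.add_sub_cancel]
    match_scalars
    · ring
    · linear_combination hqc

end OneVariable

namespace QHeisenberg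

section Model

open scoped TensorProduct

variable {n : ℕ} {K : Type*} [Field K] {q : K}

/-- The space on which `𝔥_n(q)` is made to act: the `n`-th tensor power of the span of the formal
monomials `zᶜ yᵇ xᵃ`. -/
abbrev Model (K : Type*) [Field K] (n : ℕ) := ⨂[K] _ : Fin n, (ℕ × ℕ × ℕ →₀ K)

/-- The operators by which the generators of `𝔥_n(q)` act on the model: those of index `i` act on
the `i`-th tensor factor. -/
def genAct (n : ℕ) (q : K) : GenIdx n → Module.End K (Model K n) :=
  Sum.elim (fun i => endAt i (xAct q)) (Sum.elim (fun i => endAt i (yAct q)) fun i =>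
    endAt i (zAct K))

/-- The exponents `(a, b, c)` with which `x_i`, `y_i`, `z_i` occur in the monomial `m`. -/
def exponents (m : Multiset (GenIdx n)) (i : Fin n) : ℕ × ℕ × ℕ :=
  (m.count (Sum.inl i), m.count (Sum.inr (Sum.inl i)), m.count (Sum.inr (Sum.inr i)))

theorem exponents_injective : Function.Injective (exponents (n := n)) := by
  intro m m' h
  ext s
  have hs := fun i => congrFun h i
  simp only [exponents, Prod.mk.injEq] at hs
  rcases s with i | i | i
  exacts [(hs i).1, (hs i).2.1, (hs i).2.2]

/-- The basis vector of the model that stands for the normally ordered monomial `m`. -/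
def modelMonomial (K : Type*) [Field K] (m : Multiset (GenIdx n)) : Model K n :=
  PiTensorProduct.tprod K fun i => Finsupp.single (exponents m i) 1

theorem linearIndependent_modelMonomial :
    LinearIndependent K (modelMonomial K : Multiset (GenIdx n) → Model K n) := by
  have h_eq : modelMonomial K =
      Basis.piTensorProduct (fun _ : Fin n => Finsupp.basisSingleOne (R := K)) ∘ exponents :=
    funext fun m => by simp [modelMonomial]
  rw [h_eq]
  exact (Module.Basis.linearIndependent _).comp _ exponents_injective

theorem exponents_cons_x (i : Fin n) (m : Multiset (GenIdx n)) :
    exponents (Sum.inl i ::ₘ m) = Function.update (exponents m) i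
      ((exponents m i).1 + 1, (exponents m i).2.1, (exponents m i).2.2) := by
  ext1 j
  rcases eq_or_ne j i with rfl | hj <;> simp [exponents, *]

theorem exponents_cons_y (i : Fin n) (m : Multiset (GenIdx n)) :
    exponents (Sum.inr (Sum.inl i) ::ₘ m) = Function.update (exponents m) i
      ((exponents m i).1, (exponents m i).2.1 + 1, (exponents m i).2.2) := by
  ext1 j
  rcases eq_or_ne j i with rfl | hj <;> simp [exponents, *]

theorem exponents_cons_z (i : Fin n) (m : Multiset (GenIdx n)) :
    exponents (Sum.inr (Sum.inr i) ::ₘ m) = Function.update (exponents m) i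
      ((exponents m i).1, (exponents m i).2.1, (exponents m i).2.2 + 1) := by
  ext1 j
  rcases eq_or_ne j i with rfl | hj <;> simp [exponents, *]

theorem exponents_erase_y (i : Fin n) (m : Multiset (GenIdx n)) :
    exponents (m.erase (Sum.inr (Sum.inl i))) = Function.update (exponents m) i
      ((exponents m i).1, (exponents m i).2.1 - 1, (exponents m i).2.2) := by
  ext1 j
  rcases eq_or_ne j i with rfl | hj <;> simp [exponents, Multiset.count_erase_of_ne, *]

/-- The embedding of the `i`-th tensor factor into the model by means of the other factors of the
basis vector `modelMonomial K m`. -/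
def modelSlot (K : Type*) [Field K] (m : Multiset (GenIdx n)) (i : Fin n) :
    (ℕ × ℕ × ℕ →₀ K) →ₗ[K] Model K n :=
  (PiTensorProduct.tprod K).toLinearMap (fun j => Finsupp.single (exponents m j) 1) i

theorem modelSlot_single {m m' : Multiset (GenIdx n)} {i : Fin n} {e : ℕ × ℕ × ℕ}
    (he : exponents m' = Function.update (exponents m) i e) :
    modelSlot K m i (Finsupp.single e 1) = modelMonomial K m' := by
  refine congrArg (PiTensorProduct.tprod K) (funext fun j => ?_)
  rcases eq_or_ne j i with rfl | hj <;> simp [*]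

theorem endAt_modelMonomial (i : Fin n) (T : Module.End K (ℕ × ℕ × ℕ →₀ K))
    (m : Multiset (GenIdx n)) :
    endAt (M := fun _ => ℕ × ℕ × ℕ →₀ K) i T (modelMonomial K m) =
      modelSlot K m i (T (Finsupp.single (exponents m i) 1)) :=
  endAt_tprod (M := fun _ => ℕ × ℕ × ℕ →₀ K) i T _

theorem genAct_x_modelMonomial (i : Fin n) (m : Multiset (GenIdx n)) :
    genAct n q (Sum.inl i) (modelMonomial K m) =
      (q ^ (exponents m i).2.2 * q⁻¹ ^ (exponents m i).2.1) • modelMonomial K (Sum.inl i ::ₘ m) +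
        (q ^ (exponents m i).2.2 * ∑ j ∈ Finset.range (exponents m i).2.1, (q⁻¹ ^ 2) ^ j) •
          modelMonomial K (Sum.inr (Sum.inr i) ::ₘ m.erase (Sum.inr (Sum.inl i))) := by
  have h_exchange : exponents (Sum.inr (Sum.inr i) ::ₘ m.erase (Sum.inr (Sum.inl i))) =
      Function.update (exponents m) i
        ((exponents m i).1, (exponents m i).2.1 - 1, (exponents m i).2.2 + 1) := by
    simp [exponents_cons_z, exponents_erase_y]
  rw [← modelSlot_single (exponents_cons_x i m), ← modelSlot_single h_exchange, ← map_smul,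
    ← map_smul, ← map_add, ← xAct_single]
  exact endAt_modelMonomial i _ m

theorem genAct_y_modelMonomial (i : Fin n) (m : Multiset (GenIdx n)) :
    genAct n q (Sum.inr (Sum.inl i)) (modelMonomial K m) =
      q⁻¹ ^ (exponents m i).2.2 • modelMonomial K (Sum.inr (Sum.inl i) ::ₘ m) := by
  rw [← modelSlot_single (exponents_cons_y i m), ← map_smul, ← yAct_single]
  exact endAt_modelMonomial i _ m

theorem genAct_z_modelMonomial (i : Fin n) (m : Multiset (GenIdx n)) :
    genAct n q (Sum.inr (Sum.inr i)) (modelMonomial K m) =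
      modelMonomial K (Sum.inr (Sum.inr i) ::ₘ m) := by
  rw [← modelSlot_single (exponents_cons_z i m), ← zAct_single]
  exact endAt_modelMonomial i _ m

theorem genAct_x_remainder_mem (i : Fin n) (m : Multiset (GenIdx n)) :
    (∑ j ∈ Finset.range (exponents m i).2.1, (q⁻¹ ^ 2) ^ j) •
      modelMonomial K (Sum.inr (Sum.inr i) ::ₘ m.erase (Sum.inr (Sum.inl i))) ∈
        spanCardLT K (modelMonomial K) (m.card + 1) := by
  by_cases hy : Sum.inr (Sum.inl i) ∈ m
  · refine Submodule.smul_mem _ _ (mem_spanCardLT ?_)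
    rw [Multiset.card_cons, Multiset.card_erase_add_one hy]
    exact m.card.lt_succ_self
  · simp [exponents, hy]

theorem genAct_modelMonomial (hq : q ≠ 0) (s : GenIdx n) (m : Multiset (GenIdx n)) :
    ∃ c : K, c ≠ 0 ∧ ∃ r ∈ spanCardLT K (modelMonomial K) (m.card + 1),
      genAct n q s (modelMonomial K m) = c • modelMonomial K (s ::ₘ m) + r := by
  rcases s with i | i | i
  · refine ⟨_, mul_ne_zero (pow_ne_zero (exponents m i).2.2 hq)
      (pow_ne_zero (exponents m i).2.1 (inv_ne_zero hq)), _, ?_, genAct_x_modelMonomial i m⟩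
    rw [mul_smul]
    exact Submodule.smul_mem _ _ (genAct_x_remainder_mem i m)
  · exact ⟨_, pow_ne_zero (exponents m i).2.2 (inv_ne_zero hq), 0, zero_mem _,
      (genAct_y_modelMonomial i m).trans (add_zero _).symm⟩
  · exact ⟨1, one_ne_zero, 0, zero_mem _, by simp [genAct_z_modelMonomial]⟩

end Model

variable {n : ℕ} {q : ℂ}

section Generators

/-- The generators of `𝔥_n(q)` as a single family. -/
def gen (n : ℕ) (q : ℂ) : GenIdx n → H n q :=
  Sum.elim (X n q) (Sum.elim (Y n q) (Z n q))

theorem range_gen : Set.range (gen n q) = genSet n q := by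
  rw [gen, Set.Sum.elim_range, Set.Sum.elim_range, genSet, Set.union_assoc]

theorem filtration_eq_wordSpan (d : ℕ) : filtration n q d = wordSpan ℂ (gen n q) (d + 1) := by
  simp only [wordSpan_eq_span_of_range_eq range_gen, Nat.lt_succ_iff, filtration]

theorem commute_X_X (i j : Fin n) : Commute (X n q i) (X n q j) := by
  simpa [X, Commute, SemiconjBy] using RingQuot.mkAlgHom_rel ℂ (Rel.xx (q := q) i j)

theorem commute_Y_Y (i j : Fin n) : Commute (Y n q i) (Y n q j) := by
  simpa [Y, Commute, SemiconjBy] using RingQuot.mkAlgHom_rel ℂ (Rel.yy (q := q) i j)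

theorem commute_Z_Z (i j : Fin n) : Commute (Z n q i) (Z n q j) := by
  simpa [Z, Commute, SemiconjBy] using RingQuot.mkAlgHom_rel ℂ (Rel.zz (q := q) i j)

theorem commute_X_Y {i j : Fin n} (hij : i ≠ j) : Commute (X n q i) (Y n q j) := by
  simpa [X, Y, Commute, SemiconjBy] using RingQuot.mkAlgHom_rel ℂ (Rel.xyne (q := q) i j hij)

theorem commute_X_Z {i j : Fin n} (hij : i ≠ j) : Commute (X n q i) (Z n q j) := by
  simpa [X, Z, Commute, SemiconjBy] using RingQuot.mkAlgHom_rel ℂ (Rel.xzne (q := q) i j hij)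

theorem commute_Y_Z {i j : Fin n} (hij : i ≠ j) : Commute (Y n q i) (Z n q j) := by
  simpa [Y, Z, Commute, SemiconjBy] using RingQuot.mkAlgHom_rel ℂ (Rel.yzne (q := q) i j hij)

theorem X_mul_Y (i : Fin n) : X n q i * Y n q i = q⁻¹ • (Y n q i * X n q i) + Z n q i := by
  simpa [X, Y, Z] using RingQuot.mkAlgHom_rel ℂ (Rel.xy (q := q) i)

theorem X_mul_Z (i : Fin n) : X n q i * Z n q i = q • (Z n q i * X n q i) := by
  simpa [X, Z] using RingQuot.mkAlgHom_rel ℂ (Rel.xz (q := q) i)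

theorem Y_mul_Z (i : Fin n) : Y n q i * Z n q i = q⁻¹ • (Z n q i * Y n q i) := by
  simpa [Y, Z] using RingQuot.mkAlgHom_rel ℂ (Rel.yz (q := q) i)

theorem quasiCommutes_X_Y (hq : q ≠ 0) (i j : Fin n) :
    QuasiCommutes ℂ (gen n q) (Sum.inl i) (Sum.inr (Sum.inl j)) := by
  rcases eq_or_ne i j with rfl | hij
  · refine ⟨(Units.mk0 q hq)⁻¹, ?_⟩
    have key : X n q i * Y n q i - (Units.mk0 q hq)⁻¹ • (Y n q i * X n q i) = Z n q i := by
      simp [Units.smul_def, X_mul_Y]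
    exact key ▸ apply_mem_wordSpan (Sum.inr (Sum.inr i))
  · exact .of_commute (commute_X_Y hij)

theorem quasiCommutes_X_Z (hq : q ≠ 0) (i j : Fin n) :
    QuasiCommutes ℂ (gen n q) (Sum.inl i) (Sum.inr (Sum.inr j)) := by
  rcases eq_or_ne i j with rfl | hij
  · exact ⟨Units.mk0 q hq, by simp [Units.smul_def, gen, X_mul_Z]⟩
  · exact .of_commute (commute_X_Z hij)

theorem quasiCommutes_Y_Z (hq : q ≠ 0) (i j : Fin n) :
    QuasiCommutes ℂ (gen n q) (Sum.inr (Sum.inl i)) (Sum.inr (Sum.inr j)) := by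
  rcases eq_or_ne i j with rfl | hij
  · exact ⟨(Units.mk0 q hq)⁻¹, by simp [Units.smul_def, gen, Y_mul_Z]⟩
  · exact .of_commute (commute_Y_Z hij)

theorem quasiCommutes_gen (hq : q ≠ 0) : ∀ s t, QuasiCommutes ℂ (gen n q) s t
  | .inl i, .inl j => .of_commute (commute_X_X i j)
  | .inl i, .inr (.inl j) => quasiCommutes_X_Y hq i j
  | .inl i, .inr (.inr j) => quasiCommutes_X_Z hq i j
  | .inr (.inl i), .inl j => (quasiCommutes_X_Y hq j i).symm
  | .inr (.inl i), .inr (.inl j) => .of_commute (commute_Y_Y i j)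
  | .inr (.inl i), .inr (.inr j) => quasiCommutes_Y_Z hq i j
  | .inr (.inr i), .inl j => (quasiCommutes_X_Z hq j i).symm
  | .inr (.inr i), .inr (.inl j) => (quasiCommutes_Y_Z hq j i).symm
  | .inr (.inr i), .inr (.inr j) => .of_commute (commute_Z_Z i j)

end Generators

section Representation

theorem lift_genAct_eq_of_rel (hq : q ≠ 0) {a b : FreeAlgebra ℂ (GenIdx n)} (h : Rel n q a b) :
    FreeAlgebra.lift ℂ (genAct n q) a = FreeAlgebra.lift ℂ (genAct n q) b := by
  cases h <;>
    simp only [fX, fY, fZ, map_mul, map_add, map_smul, FreeAlgebra.lift_ι_apply, genAct,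
      Sum.elim_inl, Sum.elim_inr]
  case xx i j => exact commute_endAt_self _ i j
  case yy i j => exact commute_endAt_self _ i j
  case zz i j => exact commute_endAt_self _ i j
  case xz i => rw [← map_mul, xAct_mul_zAct, map_smul, map_mul]
  case yz i => rw [← map_mul, yAct_mul_zAct, map_smul, map_mul]
  case xy i => rw [← map_mul, xAct_mul_yAct hq, map_add, map_smul, map_mul]
  case xyne i j hij => exact commute_endAt hij _ _
  case xzne i j hij => exact commute_endAt hij _ _
  case yzne i j hij => exact commute_endAt hij _ _

/-- The representation of `𝔥_n(q)` on the model. -/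
def rep (n : ℕ) (hq : q ≠ 0) : H n q →ₐ[ℂ] Module.End ℂ (Model ℂ n) :=
  RingQuot.liftAlgHom ℂ
    ⟨FreeAlgebra.lift ℂ (genAct n q), fun _ _ h => lift_genAct_eq_of_rel hq h⟩

theorem rep_gen (hq : q ≠ 0) (s : GenIdx n) : rep n hq (gen n q s) = genAct n q s := by
  rcases s with i | i | i <;> simp [rep, gen, X, Y, Z, fX, fY, fZ]

end Representation

theorem finiteDimensional_filtration (hq : q ≠ 0) (d : ℕ) :
    FiniteDimensional ℂ (filtration n q d) := by
  rw [filtration_eq_wordSpan]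
  exact finiteDimensional_wordSpan (quasiCommutes_gen hq) (d + 1)

theorem card_genIdx : Nat.card (GenIdx n) = 3 * n := by
  simp only [GenIdx, Nat.card_sum, Nat.card_fin]
  ring

theorem finrank_filtration (hq : q ≠ 0) (d : ℕ) :
    Module.finrank ℂ (filtration n q d) = (d + 3 * n).choose (3 * n) := by
  rw [filtration_eq_wordSpan, ← card_genIdx]
  refine finrank_wordSpan_succ (ρ := rep n hq) (quasiCommutes_gen hq)
    linearIndependent_modelMonomial (fun s m => ?_) d
  rw [rep_gen]
  exact genAct_modelMonomial hq s m

/-- For every `d`, the subspace `F_d` is finite-dimensional of dimension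
`(d + 3n).choose (3n)`; consequently for `d ≥ 1` one has
`dim F_d - dim F_{d-1} = (d + 3n - 1).choose (3n - 1)`, so `𝔥_n(q)` has polynomial growth
of degree `3n` and Hilbert series `(1 - t)⁻³ⁿ`. -/
theorem filtration_dimension (n : ℕ) (hn : 1 ≤ n) (q : ℂ) (hq : q ≠ 0) :
    (∀ d : ℕ, FiniteDimensional ℂ (filtration n q d) ∧
        Module.finrank ℂ (filtration n q d) = Nat.choose (d + 3 * n) (3 * n)) ∧
      ∀ d : ℕ, 1 ≤ d →
        Module.finrank ℂ (filtration n q d) - Module.finrank ℂ (filtration n q (d - 1)) =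
          Nat.choose (d + 3 * n - 1) (3 * n - 1) := by
  refine ⟨fun d => ⟨finiteDimensional_filtration hq d, finrank_filtration hq d⟩, fun d hd => ?_⟩
  obtain ⟨d, rfl⟩ := Nat.exists_eq_add_of_le' hd
  obtain ⟨k, hk⟩ : ∃ k, 3 * n = k + 1 := Nat.exists_eq_add_of_le' (by lia)
  have pascal : (d + 1 + (k + 1)).choose (k + 1) =
      (d + (k + 1)).choose k + (d + (k + 1)).choose (k + 1) := by
    rw [add_right_comm, Nat.choose_succ_succ]
  rw [finrank_filtration hq, finrank_filtration hq, hk, pascal, Nat.add_sub_cancel,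
    Nat.add_sub_cancel, Nat.add_sub_cancel, add_right_comm d 1, Nat.add_sub_cancel]

end QHeisenberg
end
end
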